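/- arXiv:math/0412241 — 2 statements merged into one kernel-verified Lean document; each statement's English description precedes it below -/
import Mathlib

section
/- Let n = 2 and let p > 1 be arbitrary. Then there exists a nontrivial classical solution of the Cauchy problem (P) in the punctured plane with initial data g ≡ 0; that is, there exists a function u : (ℝ²∖{0}) × [0,∞) → ℝ, continuous on (ℝ²∖{0}) × [0,∞), C² in x and C¹ in t on (ℝ²∖{0}) × (0,∞), satisfying u_t = Δu − u^p and u ≥ 0 on (ℝ²∖{0}) × (0,∞), with u(x,0) = 0 for all x ≠ 0, such that u is not identically zero. -/
open scoped BigOperators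

/-- The Laplacian of `f : ℝⁿ → ℝ`, expressed as the sum of second directional
derivatives along the standard basis vectors. -/
noncomputable def laplacian {n : ℕ} (f : EuclideanSpace ℝ (Fin n) → ℝ)
    (x : EuclideanSpace ℝ (Fin n)) : ℝ :=
  ∑ i : Fin n, fderiv ℝ (fun y => fderiv ℝ f y (EuclideanSpace.single i 1)) x
    (EuclideanSpace.single i 1)

/-- A classical solution of the Cauchy problem (P):
`u_t = Δu − u^p` in `(ℝⁿ∖{0}) × (0,∞)`, `u ≥ 0`, `u(·,0) = g`,
with `u` continuous on `(ℝⁿ∖{0}) × [0,∞)`, `C²` in `x` and `C¹` in `t`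
on `(ℝⁿ∖{0}) × (0,∞)`. -/
structure IsClassicalSolution (n : ℕ) (p : ℝ) (g : EuclideanSpace ℝ (Fin n) → ℝ)
    (u : EuclideanSpace ℝ (Fin n) → ℝ → ℝ) : Prop where
  continuousOn : ContinuousOn (fun q : EuclideanSpace ℝ (Fin n) × ℝ => u q.1 q.2)
    {q : EuclideanSpace ℝ (Fin n) × ℝ | q.1 ≠ 0 ∧ 0 ≤ q.2}
  contDiff_space : ∀ x : EuclideanSpace ℝ (Fin n), x ≠ 0 → ∀ t : ℝ, 0 < t →
    ContDiffAt ℝ 2 (fun y => u y t) x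
  contDiff_time : ∀ x : EuclideanSpace ℝ (Fin n), x ≠ 0 → ∀ t : ℝ, 0 < t →
    ContDiffAt ℝ 1 (u x) t
  pde : ∀ x : EuclideanSpace ℝ (Fin n), x ≠ 0 → ∀ t : ℝ, 0 < t →
    deriv (u x) t = laplacian (fun y => u y t) x - u x t ^ p
  nonneg : ∀ x : EuclideanSpace ℝ (Fin n), x ≠ 0 → ∀ t : ℝ, 0 < t → 0 ≤ u x t
  initial : ∀ x : EuclideanSpace ℝ (Fin n), x ≠ 0 → u x 0 = g x

/-!
Look for a self-similar solution `u(x, t) = |x|^(-α) w(log |x| - (log t) / 2)` with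
`α = 2 / (p - 1)`. The equation for `u` becomes
`w'' + (e^{2s} / 2 - a) w' + b w - w ^ p = 0`, with `a = 2 α + 2 - n` and `b = α (α + 2 - n)`, and
`u` has zero initial data exactly when `w` decays at `s = +∞`. Writing the equation as
`(ρ w')' + ρ N(w) = 0`, the terminal value problem at `+∞` with momentum `-ρ w' → A` can be solved
on the whole line by Picard iteration in a weighted norm, once `N` is cut off outside `[0, c]`,
where `c ^ (p - 1) = b`. A connectedness argument in `A > 0` finds a nonzero `w` that stays in
`[0, c]`, where the cut-off is not felt.
-/

section

open Set Filter Topology MeasureTheory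
open scoped BoundedContinuousFunction NNReal

section HalfLine

theorem hasDerivAt_integral_Ioi {E : Type*} [NormedAddCommGroup E] [NormedSpace ℝ E]
    [CompleteSpace E] {g : ℝ → E} (hg : Continuous g) (hgi : ∀ a, IntegrableOn g (Ioi a)) (s : ℝ) :
    HasDerivAt (fun a => ∫ x in Ioi a, g x) (-g s) s := by
  have hderiv : HasDerivAt (fun a => (∫ x in Ioi s, g x) - ∫ x in s..a, g x) (-g s) s :=
    (intervalIntegral.integral_hasDerivAt_right (hg.intervalIntegrable _ _)
      (hg.stronglyMeasurableAtFilter _ _) hg.continuousAt).const_sub _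
  refine hderiv.congr_of_eventuallyEq (Eventually.of_forall fun a => ?_)
  simp only [← intervalIntegral.integral_Ioi_sub_Ioi' (hgi s) (hgi a), sub_sub_cancel]

theorem le_of_hasDerivAt_nonneg_of_tendsto {f f' : ℝ → ℝ} {a l : ℝ}
    (hf : ∀ x, HasDerivAt f (f' x) x) (hf' : ∀ x, a < x → 0 ≤ f' x)
    (hlim : Tendsto f atTop (𝓝 l)) : f a ≤ l := by
  have hmono : MonotoneOn f (Ici a) := monotoneOn_of_hasDerivWithinAt_nonneg (convex_Ici a)
    (HasDerivAt.continuousOn fun x _ => hf x) (fun x _ => (hf x).hasDerivWithinAt)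
    (by simpa only [interior_Ici, mem_Ioi] using hf')
  exact ge_of_tendsto hlim ((eventually_ge_atTop a).mono fun x hx => hmono self_mem_Ici hx hx)

theorem ge_of_hasDerivAt_nonpos_of_tendsto {f f' : ℝ → ℝ} {a l : ℝ}
    (hf : ∀ x, HasDerivAt f (f' x) x) (hf' : ∀ x, a < x → f' x ≤ 0)
    (hlim : Tendsto f atTop (𝓝 l)) : l ≤ f a :=
  neg_le_neg_iff.1 <| le_of_hasDerivAt_nonneg_of_tendsto (f := -f) (fun x => (hf x).neg)
    (fun x hx => neg_nonneg.2 (hf' x hx)) hlim.neg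

end HalfLine

/-- The tail `∫ₛ^∞ dx / ρ x` of the scale function of the operator `w ↦ ρ⁻¹ (ρ w')'`. It solves
the homogeneous equation `(ρ w')' = 0` and vanishes at `+∞`. -/
noncomputable def scaleTail (ρ : ℝ → ℝ) (s : ℝ) : ℝ := ∫ x in Ioi s, (ρ x)⁻¹

/-- The double tail integral `∫ₛ^∞ ρ x (∫ₓ^∞ dy / ρ y) dx` from Feller's boundary classification
for the operator `w ↦ ρ⁻¹ (ρ w')'`. Its exponential is the weight that makes the Picard map of the
terminal value problem a contraction on the whole line. -/
noncomputable def fellerTail (ρ : ℝ → ℝ) (s : ℝ) : ℝ := ∫ x in Ioi s, ρ x * scaleTail ρ x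

theorem tendsto_scaleTail {ρ : ℝ → ℝ} : Tendsto (scaleTail ρ) atTop (𝓝 0) :=
  tendsto_integral_Ioi_zero tendsto_id

theorem scaleTail_nonneg {ρ : ℝ → ℝ} (hρ : ∀ s, 0 < ρ s) (s : ℝ) : 0 ≤ scaleTail ρ s :=
  setIntegral_nonneg measurableSet_Ioi fun x _ => (inv_pos.2 (hρ x)).le

theorem tendsto_fellerTail {ρ : ℝ → ℝ} : Tendsto (fellerTail ρ) atTop (𝓝 0) :=
  tendsto_integral_Ioi_zero tendsto_id

theorem tendsto_exp_fellerTail (ρ : ℝ → ℝ) (l : ℝ) :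
    Tendsto (fun x => Real.exp (l * fellerTail ρ x)) atTop (𝓝 1) := by
  simpa only [mul_zero, Real.exp_zero] using (tendsto_fellerTail.const_mul l).rexp

/-- A positive weight `ρ` on the line for which the terminal value problem at `+∞` for the operator
`w ↦ ρ⁻¹ (ρ w')'` is well posed. -/
structure IsTailWeight (ρ : ℝ → ℝ) : Prop where
  continuous : Continuous ρ
  pos : ∀ s, 0 < ρ s
  integrable_inv : Integrable fun s => (ρ s)⁻¹
  integrableOn_mul_scaleTail : ∀ s, IntegrableOn (fun x => ρ x * scaleTail ρ x) (Ioi s)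

namespace IsTailWeight

variable {ρ : ℝ → ℝ}

theorem inv_pos (h : IsTailWeight ρ) (s : ℝ) : 0 < (ρ s)⁻¹ := _root_.inv_pos.2 (h.pos s)

theorem continuous_inv (h : IsTailWeight ρ) : Continuous fun s => (ρ s)⁻¹ :=
  h.continuous.inv₀ fun s => (h.pos s).ne'

theorem hasDerivAt_scaleTail (h : IsTailWeight ρ) (s : ℝ) :
    HasDerivAt (scaleTail ρ) (-(ρ s)⁻¹) s :=
  hasDerivAt_integral_Ioi h.continuous_inv (fun _ => h.integrable_inv.integrableOn) s

theorem continuous_scaleTail (h : IsTailWeight ρ) : Continuous (scaleTail ρ) :=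
  continuous_iff_continuousAt.2 fun s => (h.hasDerivAt_scaleTail s).continuousAt

theorem scaleTail_pos (h : IsTailWeight ρ) (s : ℝ) : 0 < scaleTail ρ s :=
  (setIntegral_pos_iff_support_of_nonneg_ae (ae_of_all _ fun x => (h.inv_pos x).le)
    h.integrable_inv.integrableOn).2 <| by
      rw [(Function.support_eq_univ fun x => (h.inv_pos x).ne'), univ_inter, Real.volume_Ioi]
      exact ENNReal.zero_lt_top

theorem scaleTail_le_integral (h : IsTailWeight ρ) (s : ℝ) : scaleTail ρ s ≤ ∫ x, (ρ x)⁻¹ :=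
  setIntegral_le_integral h.integrable_inv (ae_of_all _ fun x => (h.inv_pos x).le)

theorem hasDerivAt_fellerTail (h : IsTailWeight ρ) (s : ℝ) :
    HasDerivAt (fellerTail ρ) (-(ρ s * scaleTail ρ s)) s :=
  hasDerivAt_integral_Ioi (h.continuous.mul h.continuous_scaleTail) h.integrableOn_mul_scaleTail s

theorem continuous_fellerTail (h : IsTailWeight ρ) : Continuous (fellerTail ρ) :=
  continuous_iff_continuousAt.2 fun s => (h.hasDerivAt_fellerTail s).continuousAt

theorem antitone_fellerTail (h : IsTailWeight ρ) : Antitone (fellerTail ρ) :=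
  antitone_of_hasDerivAt_nonpos h.hasDerivAt_fellerTail fun s =>
    neg_nonpos.2 (mul_pos (h.pos s) (h.scaleTail_pos s)).le

theorem fellerTail_nonneg (h : IsTailWeight ρ) (s : ℝ) : 0 ≤ fellerTail ρ s :=
  h.antitone_fellerTail.le_of_tendsto tendsto_fellerTail s

section ExpWeight

variable (h : IsTailWeight ρ) {l : ℝ}
include h

theorem hasDerivAt_exp_fellerTail (l s : ℝ) : HasDerivAt (fun x => Real.exp (l * fellerTail ρ x))
    (-(l * (ρ s * scaleTail ρ s * Real.exp (l * fellerTail ρ s)))) s :=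
  ((h.hasDerivAt_fellerTail s).const_mul l).exp.congr_deriv (by ring)

theorem integrableOn_exp_fellerTail (hl : 0 ≤ l) (s : ℝ) :
    IntegrableOn (fun x => l * (ρ x * scaleTail ρ x * Real.exp (l * fellerTail ρ x))) (Ioi s) := by
  have hderiv_nonpos : ∀ x ∈ Ioi s,
      -(l * (ρ x * scaleTail ρ x * Real.exp (l * fellerTail ρ x))) ≤ 0 := fun x _ => by
    have := h.pos x
    have := h.scaleTail_pos x
    exact neg_nonpos.2 (by positivity)
  exact integrable_neg_iff.1 <| integrableOn_Ioi_deriv_of_nonpos'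
    (fun x _ => h.hasDerivAt_exp_fellerTail l x) hderiv_nonpos (tendsto_exp_fellerTail ρ l)

theorem integral_exp_fellerTail (hl : 0 ≤ l) (s : ℝ) :
    ∫ x in Ioi s, l * (ρ x * scaleTail ρ x * Real.exp (l * fellerTail ρ x)) =
      Real.exp (l * fellerTail ρ s) - 1 := by
  have hFTC := integral_Ioi_of_hasDerivAt_of_tendsto' (a := s)
    (fun x _ => h.hasDerivAt_exp_fellerTail l x) (h.integrableOn_exp_fellerTail hl s).neg
    (tendsto_exp_fellerTail ρ l)
  rw [integral_neg] at hFTC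
  linarith

end ExpWeight

end IsTailWeight

/-- The momentum whose weighted version `e^(-2 L K) m`, with `K` the Feller tail, is the bounded
function `n`. The Picard iteration runs on `n`. -/
noncomputable def momentum (ρ : ℝ → ℝ) (L : ℝ≥0) (n : ℝ →ᵇ ℝ) (s : ℝ) : ℝ :=
  Real.exp (2 * L * fellerTail ρ s) * n s

/-- The position `w` vanishing at `+∞` whose momentum `-ρ w'` is `momentum ρ L n`. -/
noncomputable def position (ρ : ℝ → ℝ) (L : ℝ≥0) (n : ℝ →ᵇ ℝ) (s : ℝ) : ℝ :=
  ∫ x in Ioi s, momentum ρ L n x * (ρ x)⁻¹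

/-- The momentum gained between `s` and `+∞` under the force `ρ N(w)`. -/
noncomputable def impulse (ρ N : ℝ → ℝ) (L : ℝ≥0) (n : ℝ →ᵇ ℝ) (s : ℝ) : ℝ :=
  ∫ x in Ioi s, ρ x * N (position ρ L n x)

section Momentum

variable {ρ N : ℝ → ℝ} {L : ℝ≥0}

theorem momentum_sub (n₁ n₂ : ℝ →ᵇ ℝ) (s : ℝ) :
    momentum ρ L (n₁ - n₂) s = momentum ρ L n₁ s - momentum ρ L n₂ s :=
  mul_sub _ _ _

theorem position_zero (s : ℝ) : position ρ L 0 s = 0 := by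
  simp [position, momentum]

theorem impulse_zero (hN0 : N 0 = 0) (s : ℝ) : impulse ρ N L 0 s = 0 := by
  simp [impulse, position_zero, hN0]

end Momentum

namespace IsTailWeight

variable {ρ N : ℝ → ℝ} {L : ℝ≥0} (h : IsTailWeight ρ)
include h

theorem continuous_momentum (n : ℝ →ᵇ ℝ) : Continuous (momentum ρ L n) :=
  (continuous_const.mul h.continuous_fellerTail).rexp.mul n.continuous

theorem abs_momentum_mul_inv_le (n : ℝ →ᵇ ℝ) {s x : ℝ} (hx : s ≤ x) :
    |momentum ρ L n x * (ρ x)⁻¹| ≤ Real.exp (2 * L * fellerTail ρ s) * ‖n‖ * (ρ x)⁻¹ := by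
  have hinv := h.inv_pos x
  have hanti := h.antitone_fellerTail hx
  have hn := n.norm_coe_le_norm x
  rw [abs_mul, abs_of_pos hinv, momentum, abs_mul, Real.abs_exp, ← Real.norm_eq_abs]
  gcongr

theorem integrableOn_momentum_mul_inv (n : ℝ →ᵇ ℝ) (s : ℝ) :
    IntegrableOn (fun x => momentum ρ L n x * (ρ x)⁻¹) (Ioi s) :=
  Integrable.mono' (h.integrable_inv.integrableOn.const_mul _)
    ((h.continuous_momentum n).mul h.continuous_inv).aestronglyMeasurable
    (ae_restrict_of_forall_mem measurableSet_Ioi fun _ hx =>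
      (Real.norm_eq_abs _).trans_le (h.abs_momentum_mul_inv_le n (mem_Ioi.1 hx).le))

theorem abs_position_le (n : ℝ →ᵇ ℝ) (s : ℝ) :
    |position ρ L n s| ≤ Real.exp (2 * L * fellerTail ρ s) * ‖n‖ * scaleTail ρ s := by
  rw [scaleTail, ← integral_const_mul]
  exact norm_integral_le_of_norm_le (h.integrable_inv.integrableOn.const_mul _)
    (ae_restrict_of_forall_mem measurableSet_Ioi fun _ hx =>
      (Real.norm_eq_abs _).trans_le (h.abs_momentum_mul_inv_le n (mem_Ioi.1 hx).le))

theorem position_sub (n₁ n₂ : ℝ →ᵇ ℝ) (s : ℝ) :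
    position ρ L (n₁ - n₂) s = position ρ L n₁ s - position ρ L n₂ s := by
  simp only [position, momentum_sub, sub_mul]
  exact integral_sub (h.integrableOn_momentum_mul_inv n₁ s) (h.integrableOn_momentum_mul_inv n₂ s)

theorem continuous_position_apply (s : ℝ) : Continuous fun n => position ρ L n s := by
  refine (LipschitzWith.of_dist_le' (K := Real.exp (2 * L * fellerTail ρ s) * scaleTail ρ s)
    fun n₁ n₂ => ?_).continuous
  rw [Real.dist_eq, ← h.position_sub, dist_eq_norm]
  exact (h.abs_position_le _ s).trans_eq (by ring)

theorem hasDerivAt_position (n : ℝ →ᵇ ℝ) (s : ℝ) :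
    HasDerivAt (position ρ L n) (-(momentum ρ L n s * (ρ s)⁻¹)) s :=
  hasDerivAt_integral_Ioi ((h.continuous_momentum n).mul h.continuous_inv)
    (h.integrableOn_momentum_mul_inv n) s

theorem continuous_force (hN : Continuous N) (n : ℝ →ᵇ ℝ) :
    Continuous fun x => ρ x * N (position ρ L n x) :=
  h.continuous.mul (hN.comp
    (continuous_iff_continuousAt.2 fun s => (h.hasDerivAt_position n s).continuousAt))

theorem abs_force_sub_le (hN : LipschitzWith L N) (n₁ n₂ : ℝ →ᵇ ℝ) (s : ℝ) :
    |ρ s * N (position ρ L n₁ s) - ρ s * N (position ρ L n₂ s)| ≤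
      ‖n₁ - n₂‖ / 2 * (2 * L * (ρ s * scaleTail ρ s * Real.exp (2 * L * fellerTail ρ s))) := by
  have hρ := h.pos s
  have hpos := h.abs_position_le (L := L) (n₁ - n₂) s
  rw [h.position_sub] at hpos
  calc |ρ s * N (position ρ L n₁ s) - ρ s * N (position ρ L n₂ s)|
      = ρ s * |N (position ρ L n₁ s) - N (position ρ L n₂ s)| := by
        rw [← mul_sub, abs_mul, abs_of_pos hρ]
    _ ≤ ρ s * (L * |position ρ L n₁ s - position ρ L n₂ s|) := by
        gcongr
        exact hN.dist_le_mul _ _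
    _ ≤ ρ s * (L * (Real.exp (2 * L * fellerTail ρ s) * ‖n₁ - n₂‖ * scaleTail ρ s)) := by gcongr
    _ = _ := by ring

theorem integrableOn_force (hN : LipschitzWith L N) (hN0 : N 0 = 0) (n : ℝ →ᵇ ℝ) (s : ℝ) :
    IntegrableOn (fun x => ρ x * N (position ρ L n x)) (Ioi s) := by
  refine Integrable.mono' ((h.integrableOn_exp_fellerTail (l := 2 * L) (by positivity) s).const_mul
    (‖n‖ / 2))
    (h.continuous_force hN.continuous n).aestronglyMeasurable (ae_of_all _ fun x => ?_)
  simpa [position_zero, hN0] using h.abs_force_sub_le hN n 0 x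

theorem abs_impulse_sub_le (hN : LipschitzWith L N) (hN0 : N 0 = 0) (n₁ n₂ : ℝ →ᵇ ℝ) (s : ℝ) :
    |impulse ρ N L n₁ s - impulse ρ N L n₂ s| ≤
      Real.exp (2 * L * fellerTail ρ s) * (‖n₁ - n₂‖ / 2) := by
  have hL : (0 : ℝ) ≤ 2 * L := by positivity
  calc |impulse ρ N L n₁ s - impulse ρ N L n₂ s|
      ≤ ‖n₁ - n₂‖ / 2 * (Real.exp (2 * L * fellerTail ρ s) - 1) := by
        rw [impulse, impulse, ← integral_sub (h.integrableOn_force hN hN0 n₁ s)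
          (h.integrableOn_force hN hN0 n₂ s), ← h.integral_exp_fellerTail hL, ← integral_const_mul]
        exact norm_integral_le_of_norm_le ((h.integrableOn_exp_fellerTail hL s).const_mul _)
          (ae_of_all _ fun x => (Real.norm_eq_abs _).trans_le (h.abs_force_sub_le hN n₁ n₂ x))
    _ ≤ Real.exp (2 * L * fellerTail ρ s) * (‖n₁ - n₂‖ / 2) := by
        rw [mul_comm]
        gcongr
        linarith

theorem hasDerivAt_impulse (hN : LipschitzWith L N) (hN0 : N 0 = 0) (n : ℝ →ᵇ ℝ) (s : ℝ) :
    HasDerivAt (impulse ρ N L n) (-(ρ s * N (position ρ L n s))) s :=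
  hasDerivAt_integral_Ioi (h.continuous_force hN.continuous n) (h.integrableOn_force hN hN0 n) s

theorem abs_exp_neg_mul_sub_le {A a e s : ℝ} (ha : |a| ≤ Real.exp (2 * L * fellerTail ρ s) * e) :
    |Real.exp (-(2 * L * fellerTail ρ s)) * (A - a)| ≤ |A| + e := by
  have hexp : Real.exp (-(2 * L * fellerTail ρ s)) ≤ 1 := by
    have := h.fellerTail_nonneg s
    exact Real.exp_le_one_iff.2 (neg_nonpos.2 (by positivity))
  calc |Real.exp (-(2 * L * fellerTail ρ s)) * (A - a)|
      ≤ Real.exp (-(2 * L * fellerTail ρ s)) * (|A| + Real.exp (2 * L * fellerTail ρ s) * e) := by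
        rw [abs_mul, Real.abs_exp]
        gcongr
        exact (abs_sub _ _).trans (by gcongr)
    _ = Real.exp (-(2 * L * fellerTail ρ s)) * |A| + e := by
        rw [mul_add, ← mul_assoc, ← Real.exp_add, neg_add_cancel, Real.exp_zero, one_mul]
    _ ≤ |A| + e := by
        gcongr
        exact mul_le_of_le_one_left (abs_nonneg A) hexp

end IsTailWeight

/-- The Picard map, in weighted momenta, of the terminal value problem `w' = -m / ρ`,
`m' = ρ N(w)` with `w(+∞) = 0` and `m(+∞) = A`. -/
noncomputable def picardMap {ρ N : ℝ → ℝ} {L : ℝ≥0} (h : IsTailWeight ρ) (hN : LipschitzWith L N)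
    (hN0 : N 0 = 0) (A : ℝ) (n : ℝ →ᵇ ℝ) : ℝ →ᵇ ℝ :=
  BoundedContinuousFunction.ofNormedAddCommGroup
    (fun s => Real.exp (-(2 * L * fellerTail ρ s)) * (A - impulse ρ N L n s))
    ((continuous_const.mul h.continuous_fellerTail).neg.rexp.mul (continuous_const.sub
      (continuous_iff_continuousAt.2 fun s => (h.hasDerivAt_impulse hN hN0 n s).continuousAt)))
    (|A| + ‖n‖ / 2) fun s => h.abs_exp_neg_mul_sub_le <| by
      simpa [impulse_zero hN0] using h.abs_impulse_sub_le hN hN0 n 0 s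

/-- The pair `(w, m)` solves `w' = -m / ρ`, `m' = ρ N(w)`, that is `(ρ w')' + ρ N(w) = 0`, with
`w(+∞) = 0` and momentum `m(+∞) = A`. -/
structure IsDecayingSolution (ρ N : ℝ → ℝ) (A : ℝ) (w m : ℝ → ℝ) : Prop where
  hasDerivAt_position : ∀ s, HasDerivAt w (-(m s * (ρ s)⁻¹)) s
  hasDerivAt_momentum : ∀ s, HasDerivAt m (ρ s * N (w s)) s
  tendsto_position : Tendsto w atTop (𝓝 0)
  tendsto_momentum : Tendsto m atTop (𝓝 A)

namespace IsTailWeight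

variable {ρ N : ℝ → ℝ} {L : ℝ≥0} (h : IsTailWeight ρ)
include h

theorem dist_picardMap_le (hN : LipschitzWith L N) (hN0 : N 0 = 0) (A B : ℝ) (n₁ n₂ : ℝ →ᵇ ℝ) :
    dist (picardMap h hN hN0 A n₁) (picardMap h hN hN0 B n₂) ≤ |A - B| + dist n₁ n₂ / 2 := by
  refine (BoundedContinuousFunction.dist_le (by positivity)).2 fun s => ?_
  rw [dist_eq_norm n₁ n₂]
  convert h.abs_exp_neg_mul_sub_le (A := A - B) (h.abs_impulse_sub_le hN hN0 n₁ n₂ s) using 1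
  rw [Real.dist_eq]
  simp only [picardMap, BoundedContinuousFunction.coe_ofNormedAddCommGroup]
  ring_nf

theorem exists_lipschitz_fixedPoint_picardMap (hN : LipschitzWith L N) (hN0 : N 0 = 0) :
    ∃ n : ℝ → ℝ →ᵇ ℝ, LipschitzWith 2 n ∧ ∀ A, picardMap h hN hN0 A (n A) = n A := by
  have hcontracting (A : ℝ) : ContractingWith (1 / 2) (picardMap h hN hN0 A) := by
    refine ⟨half_lt_self one_pos, LipschitzWith.of_dist_le_mul fun n₁ n₂ => ?_⟩
    have := h.dist_picardMap_le hN hN0 A A n₁ n₂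
    simp only [sub_self, abs_zero, zero_add] at this
    push_cast
    linarith
  choose n hn using fun A => (⟨_, (hcontracting A).fixedPoint_isFixedPt⟩ :
    ∃ n, picardMap h hN hN0 A n = n)
  refine ⟨n, LipschitzWith.of_dist_le_mul fun A B => ?_, hn⟩
  have := h.dist_picardMap_le hN hN0 A B (n A) (n B)
  rw [hn, hn] at this
  rw [Real.dist_eq]
  push_cast
  linarith

theorem momentum_of_picardMap_eq (hN : LipschitzWith L N) (hN0 : N 0 = 0) {A : ℝ} {n : ℝ →ᵇ ℝ}
    (hn : picardMap h hN hN0 A n = n) (s : ℝ) : momentum ρ L n s = A - impulse ρ N L n s := by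
  calc momentum ρ L n s
      = Real.exp (2 * L * fellerTail ρ s) * picardMap h hN hN0 A n s := by rw [hn, momentum]
    _ = A - impulse ρ N L n s := by
        rw [picardMap, BoundedContinuousFunction.coe_ofNormedAddCommGroup, ← mul_assoc,
          ← Real.exp_add, add_neg_cancel, Real.exp_zero, one_mul]

theorem isDecayingSolution_of_picardMap_eq (hN : LipschitzWith L N) (hN0 : N 0 = 0) {A : ℝ}
    {n : ℝ →ᵇ ℝ} (hn : picardMap h hN hN0 A n = n) :
    IsDecayingSolution ρ N A (position ρ L n) (momentum ρ L n) where
  hasDerivAt_position := h.hasDerivAt_position n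
  hasDerivAt_momentum s := by
    simpa only [← funext (h.momentum_of_picardMap_eq hN hN0 hn), neg_neg]
      using (h.hasDerivAt_impulse hN hN0 n s).const_sub A
  tendsto_position := tendsto_integral_Ioi_zero tendsto_id
  tendsto_momentum := by
    have himpulse : Tendsto (impulse ρ N L n) atTop (𝓝 0) := tendsto_integral_Ioi_zero tendsto_id
    simpa only [← funext (h.momentum_of_picardMap_eq hN hN0 hn), sub_zero]
      using himpulse.const_sub A

theorem exists_isDecayingSolution_family (hN : LipschitzWith L N) (hN0 : N 0 = 0) :
    ∃ w m : ℝ → ℝ → ℝ, (∀ A, IsDecayingSolution ρ N A (w A) (m A)) ∧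
      (∀ s, Continuous fun A => w A s) ∧ ∀ s, Continuous fun A => m A s := by
  obtain ⟨n, hlip, hn⟩ := h.exists_lipschitz_fixedPoint_picardMap hN hN0
  exact ⟨fun A => position ρ L (n A), fun A => momentum ρ L (n A),
    fun A => h.isDecayingSolution_of_picardMap_eq hN hN0 (hn A),
    fun s => (h.continuous_position_apply s).comp hlip.continuous,
    fun s => continuous_const.mul
      ((continuous_eval_const s).comp hlip.continuous)⟩

end IsTailWeight

namespace IsDecayingSolution

variable {ρ N w m : ℝ → ℝ} {A : ℝ} {L : ℝ≥0} (hw : IsDecayingSolution ρ N A w m)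
include hw

theorem continuous_position : Continuous w :=
  continuous_iff_continuousAt.2 fun s => (hw.hasDerivAt_position s).continuousAt

theorem continuous_momentum : Continuous m :=
  continuous_iff_continuousAt.2 fun s => (hw.hasDerivAt_momentum s).continuousAt

variable (h : IsTailWeight ρ)
include h

theorem monotone_momentum (hN : ∀ a, 0 ≤ N a) : Monotone m :=
  monotone_of_hasDerivAt_nonneg hw.hasDerivAt_momentum fun s => mul_nonneg (h.pos s).le (hN _)

theorem momentum_le (hN : ∀ a, 0 ≤ N a) (s : ℝ) : m s ≤ A :=
  (hw.monotone_momentum h hN).ge_of_tendsto hw.tendsto_momentum s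

theorem antitoneOn_position (hN : ∀ a, 0 ≤ N a) {s : ℝ} (hs : 0 ≤ m s) : AntitoneOn w (Ici s) :=
  antitoneOn_of_hasDerivWithinAt_nonpos (convex_Ici s) hw.continuous_position.continuousOn
    (fun x _ => (hw.hasDerivAt_position x).hasDerivWithinAt) fun x hx =>
      neg_nonpos.2 <| mul_nonneg
        (hs.trans (hw.monotone_momentum h hN (interior_subset hx))) (h.inv_pos x).le

theorem hasDerivAt_position_sub_scaleTail (κ s : ℝ) :
    HasDerivAt (fun x => w x - κ * scaleTail ρ x) ((κ - m s) * (ρ s)⁻¹) s :=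
  ((hw.hasDerivAt_position s).sub ((h.hasDerivAt_scaleTail s).const_mul κ)).congr_deriv (by ring)

omit h in
theorem tendsto_position_sub_scaleTail (κ : ℝ) :
    Tendsto (fun x => w x - κ * scaleTail ρ x) atTop (𝓝 0) := by
  simpa only [mul_zero, sub_zero] using hw.tendsto_position.sub (tendsto_scaleTail.const_mul κ)

theorem position_le (hN : ∀ a, 0 ≤ N a) (s : ℝ) : w s ≤ A * scaleTail ρ s :=
  sub_nonpos.1 <| le_of_hasDerivAt_nonneg_of_tendsto
    (f := fun x => w x - A * scaleTail ρ x) (hw.hasDerivAt_position_sub_scaleTail h A)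
    (fun x _ => mul_nonneg (sub_nonneg.2 (hw.momentum_le h hN x)) (h.inv_pos x).le)
    (hw.tendsto_position_sub_scaleTail A)

theorem le_position (hN : ∀ a, 0 ≤ N a) {κ s : ℝ} (hs : κ ≤ m s) : κ * scaleTail ρ s ≤ w s :=
  sub_nonneg.1 <| ge_of_hasDerivAt_nonpos_of_tendsto
    (f := fun x => w x - κ * scaleTail ρ x) (hw.hasDerivAt_position_sub_scaleTail h κ)
    (fun x hx => mul_nonpos_of_nonpos_of_nonneg
      (sub_nonpos.2 (hs.trans (hw.monotone_momentum h hN hx.le))) (h.inv_pos x).le)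
    (hw.tendsto_position_sub_scaleTail κ)

theorem exists_position_pos (hA : 0 < A) (hN : ∀ a, 0 ≤ N a) : ∃ s, 0 < w s := by
  obtain ⟨s, hs⟩ := (hw.tendsto_momentum.eventually_const_le (half_lt_self hA)).exists
  exact ⟨s, (mul_pos (half_pos hA) (h.scaleTail_pos s)).trans_le (hw.le_position h hN hs)⟩

theorem le_momentum (hA : 0 ≤ A) (hLip : LipschitzWith L N) (hN : ∀ a, 0 ≤ N a)
    (hN0 : ∀ a ≤ 0, N a = 0) (s : ℝ) : A - L * A * fellerTail ρ s ≤ m s := by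
  have hforce (x : ℝ) : N (w x) ≤ L * (A * scaleTail ρ x) := by
    rcases le_total (w x) 0 with hx | hx
    · have := h.scaleTail_pos x
      rw [hN0 _ hx]
      positivity
    · calc N (w x) ≤ L * w x := by
            simpa only [Real.dist_eq, hN0 0 le_rfl, sub_zero, abs_of_nonneg (hN _),
              abs_of_nonneg hx] using hLip.dist_le_mul (w x) 0
        _ ≤ L * (A * scaleTail ρ x) := by
            gcongr
            exact hw.position_le h hN x
  have hderiv (x : ℝ) : HasDerivAt (fun y => m y + L * A * fellerTail ρ y)
      (ρ x * (N (w x) - L * (A * scaleTail ρ x))) x :=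
    ((hw.hasDerivAt_momentum x).add ((h.hasDerivAt_fellerTail x).const_mul (L * A))).congr_deriv
      (by ring)
  have hlim : Tendsto (fun y => m y + L * A * fellerTail ρ y) atTop (𝓝 A) := by
    simpa only [mul_zero, add_zero]
      using hw.tendsto_momentum.add (tendsto_fellerTail.const_mul (L * A))
  have hle := ge_of_hasDerivAt_nonpos_of_tendsto (a := s) hderiv
    (fun x _ => mul_nonpos_of_nonneg_of_nonpos (h.pos x).le (sub_nonpos.2 (hforce x))) hlim
  exact sub_le_iff_le_add.2 hle

theorem half_mul_scaleTail_le_position (hA : 0 ≤ A) (hLip : LipschitzWith L N) (hN : ∀ a, 0 ≤ N a)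
    (hN0 : ∀ a ≤ 0, N a = 0) {s : ℝ} (hs : L * fellerTail ρ s ≤ 1 / 2) :
    A / 2 * scaleTail ρ s ≤ w s := by
  refine hw.le_position h hN (le_trans ?_ (hw.le_momentum h hA hLip hN hN0 s))
  linarith [mul_le_mul_of_nonneg_left hs hA]

/- If the momentum became negative at `s₁` it would vanish at some `σ`, where `w` is maximal. On
the way from `w σ` down to `c` there is no force, so the momentum stays zero and `w` cannot move. -/
theorem momentum_nonneg (hA : 0 < A) (hN : ∀ a, 0 ≤ N a) {c : ℝ} (hc : 0 < c)
    (hNc : ∀ a, c ≤ a → N a = 0) {s₂ : ℝ} (hs₂ : c < w s₂) (s₁ : ℝ) : 0 ≤ m s₁ := by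
  by_contra! hs₁
  have hmono := hw.monotone_momentum h hN
  obtain ⟨τ, hτ, hs₁τ⟩ := ((hw.tendsto_momentum.eventually_const_lt hA).and
    (eventually_ge_atTop s₁)).exists
  obtain ⟨σ, -, hmσ⟩ :=
    intermediate_value_Icc hs₁τ hw.continuous_momentum.continuousOn ⟨hs₁.le, hτ.le⟩
  have hincr : MonotoneOn w (Iic σ) :=
    monotoneOn_of_hasDerivWithinAt_nonneg (convex_Iic σ) hw.continuous_position.continuousOn
      (fun x _ => (hw.hasDerivAt_position x).hasDerivWithinAt) fun x hx =>
        neg_nonneg.2 <| mul_nonpos_of_nonpos_of_nonneg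
          ((hmono (mem_Iic.1 (interior_subset hx))).trans_eq hmσ) (h.inv_pos x).le
  have hdecr := hw.antitoneOn_position h hN hmσ.ge
  have hmax : c < w σ := by
    rcases le_total s₂ σ with hle | hle
    · exact hs₂.trans_le (hincr hle self_mem_Iic hle)
    · exact hs₂.trans_le (hdecr self_mem_Ici hle hle)
  obtain ⟨b, hb, hσb⟩ := ((hw.tendsto_position.eventually_lt_const hc).and
    (eventually_ge_atTop σ)).exists
  obtain ⟨s₃, hs₃, hws₃⟩ :=
    intermediate_value_Icc' hσb hw.continuous_position.continuousOn ⟨hb.le, hmax.le⟩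
  have hrest : ∀ x ∈ Icc σ s₃, m x = m σ :=
    constant_of_has_deriv_right_zero hw.continuous_momentum.continuousOn fun x hx => by
      have hcx : c ≤ w x := hws₃ ▸ hdecr hx.1 hs₃.1 hx.2.le
      simpa only [hNc _ hcx, mul_zero] using (hw.hasDerivAt_momentum x).hasDerivWithinAt
  have hstuck : w s₃ = w σ :=
    constant_of_has_deriv_right_zero hw.continuous_position.continuousOn (fun x hx => by
      simpa only [hrest x (Ico_subset_Icc_self hx), hmσ, zero_mul, neg_zero]
        using (hw.hasDerivAt_position x).hasDerivWithinAt) s₃ (right_mem_Icc.2 hs₃.1)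
  exact hmax.ne (hws₃.symm.trans hstuck)

end IsDecayingSolution

namespace IsTailWeight

variable {ρ N : ℝ → ℝ} {L : ℝ≥0} {c : ℝ} (h : IsTailWeight ρ)
include h

/-- Shooting in the terminal momentum: a small one keeps `w` below `c`, a large one pushes it above
`c`, and `w` and `m` cannot leave their ranges simultaneously, so by connectedness some terminal
momentum keeps `w ≤ c` and `m ≥ 0`. -/
theorem exists_isDecayingSolution_le (hLip : LipschitzWith L N) (hc : 0 < c) (hN : ∀ a, 0 ≤ N a)
    (hN0 : ∀ a ≤ 0, N a = 0) (hNc : ∀ a, c ≤ a → N a = 0) :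
    ∃ A > 0, ∃ w m : ℝ → ℝ, IsDecayingSolution ρ N A w m ∧ (∀ s, w s ≤ c) ∧ ∀ s, 0 ≤ m s := by
  obtain ⟨w, m, hsol, hcont_w, hcont_m⟩ := h.exists_isDecayingSolution_family hLip (hN0 0 le_rfl)
  by_contra! hcon
  have hopen_w : IsOpen {A | ∃ s, c < w A s} := by
    simpa only [ofPred_exists] using
      isOpen_iUnion fun s => isOpen_lt continuous_const (hcont_w s)
  have hopen_m : IsOpen {A | ∃ s, m A s < 0} := by
    simpa only [ofPred_exists] using
      isOpen_iUnion fun s => isOpen_lt (hcont_m s) continuous_const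
  have hcover : Ioi 0 ⊆ {A | ∃ s, c < w A s} ∪ {A | ∃ s, m A s < 0} := fun A hA =>
    or_iff_not_imp_left.2 fun hle => hcon A hA _ _ (hsol A) fun s => not_lt.1 fun hs => hle ⟨s, hs⟩
  have hlarge : (Ioi 0 ∩ {A | ∃ s, c < w A s}).Nonempty := by
    obtain ⟨s, hs⟩ : ∃ s, L * fellerTail ρ s ≤ 1 / 2 :=
      ((tendsto_fellerTail.const_mul (L : ℝ)).eventually_le_const (by norm_num)).exists
    have hW := h.scaleTail_pos s
    have hA : 0 < 4 * c / scaleTail ρ s := by positivity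
    refine ⟨_, hA, s, ?_⟩
    calc c < 4 * c / scaleTail ρ s / 2 * scaleTail ρ s := by field_simp; linarith
      _ ≤ w _ s := (hsol _).half_mul_scaleTail_le_position h hA.le hLip hN hN0 hs
  have hsmall : (Ioi 0 ∩ {A | ∃ s, m A s < 0}).Nonempty := by
    have hI : 0 < ∫ x, (ρ x)⁻¹ := (h.scaleTail_pos 0).trans_le (h.scaleTail_le_integral 0)
    have hA : 0 < c / ∫ x, (ρ x)⁻¹ := by positivity
    refine ⟨_, hA, (hcover hA).resolve_left fun ⟨s, hs⟩ => hs.not_ge ?_⟩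
    calc w _ s ≤ c / (∫ x, (ρ x)⁻¹) * scaleTail ρ s := (hsol _).position_le h hN s
      _ ≤ c / (∫ x, (ρ x)⁻¹) * ∫ x, (ρ x)⁻¹ := by gcongr; exact h.scaleTail_le_integral s
      _ = c := div_mul_cancel₀ _ hI.ne'
  obtain ⟨A, hA, ⟨s₂, hs₂⟩, s₁, hs₁⟩ :=
    isPreconnected_Ioi _ _ hopen_w hopen_m hcover hlarge hsmall
  exact hs₁.not_ge ((hsol A).momentum_nonneg h hA hN hc hNc hs₂ s₁)

theorem exists_isDecayingSolution_mem_Icc {f : ℝ → ℝ} (hLip : LipschitzOnWith L f (Icc 0 c))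
    (hc : 0 < c) (hf : ∀ a ∈ Icc 0 c, 0 ≤ f a) (hf0 : f 0 = 0) (hfc : f c = 0) :
    ∃ A, ∃ w m : ℝ → ℝ, IsDecayingSolution ρ f A w m ∧ (∀ s, w s ∈ Icc 0 c) ∧
      ∃ s, 0 < w s := by
  set N : ℝ → ℝ := IccExtend hc.le ((Icc 0 c).domRestrict f)
  have hN_mem {a : ℝ} (ha : a ∈ Icc 0 c) : N a = f a := IccExtend_of_mem _ _ ha
  have hN : ∀ a, 0 ≤ N a := fun a => hf _ (projIcc 0 c hc.le a).2
  obtain ⟨A, hA, w, m, hw, hwc, hm⟩ := h.exists_isDecayingSolution_le (N := N)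
    (hLip.to_restrict.comp (LipschitzWith.projIcc hc.le)) hc hN
    (fun a ha => (IccExtend_of_le_left _ _ ha).trans hf0)
    (fun a ha => (IccExtend_of_right_le _ _ ha).trans hfc)
  have hw_mem (s : ℝ) : w s ∈ Icc 0 c :=
    ⟨by simpa only [zero_mul] using hw.le_position h hN (hm s), hwc s⟩
  exact ⟨A, w, m, ⟨hw.hasDerivAt_position, fun s => hN_mem (hw_mem s) ▸ hw.hasDerivAt_momentum s,
    hw.tendsto_position, hw.tendsto_momentum⟩, hw_mem, hw.exists_position_pos h hA hN⟩

end IsTailWeight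

/-- The weight `ρ` for which `ρ⁻¹ (ρ w')' = w'' + (e^{2s} / 2 - a) w'`, the linear part of the
self-similar profile equation in the logarithmic variable. -/
noncomputable def selfSimilarWeight (a s : ℝ) : ℝ := Real.exp (Real.exp (2 * s) / 4 - a * s)

section SelfSimilarWeight

variable {a : ℝ}

theorem continuous_selfSimilarWeight : Continuous (selfSimilarWeight a) := by
  unfold selfSimilarWeight
  fun_prop

theorem selfSimilarWeight_pos (s : ℝ) : 0 < selfSimilarWeight a s := Real.exp_pos _

theorem inv_selfSimilarWeight (s : ℝ) :
    (selfSimilarWeight a s)⁻¹ = Real.exp (a * s - Real.exp (2 * s) / 4) := by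
  rw [selfSimilarWeight, ← Real.exp_neg, neg_sub]

theorem continuous_inv_selfSimilarWeight : Continuous fun s => (selfSimilarWeight a s)⁻¹ :=
  continuous_selfSimilarWeight.inv₀ fun s => (selfSimilarWeight_pos s).ne'

theorem hasDerivAt_exp_two_mul (s : ℝ) :
    HasDerivAt (fun x : ℝ => Real.exp (2 * x)) (2 * Real.exp (2 * s)) s :=
  ((hasDerivAt_id s).const_mul 2).exp.congr_deriv (by simp only [id]; ring)

theorem hasDerivAt_inv_selfSimilarWeight (s : ℝ) :
    HasDerivAt (fun x => (selfSimilarWeight a x)⁻¹)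
      ((a - Real.exp (2 * s) / 2) * (selfSimilarWeight a s)⁻¹) s := by
  simp only [inv_selfSimilarWeight]
  refine (((hasDerivAt_id s).const_mul a).sub
    ((hasDerivAt_exp_two_mul s).div_const 4)).exp.congr_deriv ?_
  simp only [Pi.sub_apply, id]
  ring

theorem inv_selfSimilarWeight_le_exp (s : ℝ) : (selfSimilarWeight a s)⁻¹ ≤ Real.exp (a * s) := by
  rw [inv_selfSimilarWeight, Real.exp_le_exp]
  linarith [Real.exp_pos (2 * s)]

theorem inv_selfSimilarWeight_le_exp_neg {s : ℝ} (hs : 0 ≤ s) :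
    (selfSimilarWeight a s)⁻¹ ≤ Real.exp ((a + 1) ^ 2 / 2) * Real.exp (-s) := by
  have hquad := Real.quadratic_le_exp_of_nonneg (mul_nonneg zero_le_two hs)
  rw [inv_selfSimilarWeight, ← Real.exp_add, Real.exp_le_exp]
  linarith [sq_nonneg (a + 1 - s)]

theorem integrable_inv_selfSimilarWeight (ha : 0 < a) :
    Integrable fun s => (selfSimilarWeight a s)⁻¹ := by
  have hmeas := (continuous_inv_selfSimilarWeight (a := a)).aestronglyMeasurable (μ := volume)
  have hnorm (s : ℝ) : ‖(selfSimilarWeight a s)⁻¹‖ = (selfSimilarWeight a s)⁻¹ :=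
    Real.norm_of_nonneg (inv_pos.2 (selfSimilarWeight_pos s)).le
  have hleft : IntegrableOn (fun s => (selfSimilarWeight a s)⁻¹) (Iic 0) :=
    (integrableOn_exp_mul_Iic ha 0).mono' hmeas.restrict
      (ae_of_all _ fun s => (hnorm s).trans_le (inv_selfSimilarWeight_le_exp s))
  have hright : IntegrableOn (fun s => (selfSimilarWeight a s)⁻¹) (Ioi 0) :=
    ((integrableOn_exp_neg_Ioi 0).const_mul _).mono' hmeas.restrict
      (ae_restrict_of_forall_mem measurableSet_Ioi fun s hs =>
        (hnorm s).trans_le (inv_selfSimilarWeight_le_exp_neg (mem_Ioi.1 hs).le))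
  rw [← integrableOn_univ, ← Iic_union_Ioi]
  exact hleft.union hright

theorem tendsto_inv_selfSimilarWeight (a : ℝ) :
    Tendsto (fun s => (selfSimilarWeight a s)⁻¹) atTop (𝓝 0) := by
  refine squeeze_zero' (Eventually.of_forall fun s => (inv_pos.2 (selfSimilarWeight_pos s)).le)
    ((eventually_ge_atTop 0).mono fun s => inv_selfSimilarWeight_le_exp_neg) ?_
  simpa only [mul_zero] using Real.tendsto_exp_neg_atTop_nhds_zero.const_mul _

theorem hasDerivAt_scaleTail_selfSimilarWeight (ha : 0 < a) (s : ℝ) :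
    HasDerivAt (scaleTail (selfSimilarWeight a)) (-(selfSimilarWeight a s)⁻¹) s :=
  hasDerivAt_integral_Ioi continuous_inv_selfSimilarWeight
    (fun _ => (integrable_inv_selfSimilarWeight ha).integrableOn) s

theorem scaleTail_selfSimilarWeight_le (ha : 0 < a) {s : ℝ} (hs : 4 * a ≤ Real.exp (2 * s)) :
    Real.exp (2 * s) / 4 * scaleTail (selfSimilarWeight a) s ≤ (selfSimilarWeight a s)⁻¹ := by
  set q := Real.exp (2 * s)
  have hderiv (x : ℝ) : HasDerivAt
      (fun y => q / 4 * scaleTail (selfSimilarWeight a) y - (selfSimilarWeight a y)⁻¹)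
      ((Real.exp (2 * x) / 2 - a - q / 4) * (selfSimilarWeight a x)⁻¹) x :=
    (((hasDerivAt_scaleTail_selfSimilarWeight ha x).const_mul (q / 4)).sub
      (hasDerivAt_inv_selfSimilarWeight x)).congr_deriv (by ring)
  have hderiv_nonneg (x : ℝ) (hx : s < x) :
      0 ≤ (Real.exp (2 * x) / 2 - a - q / 4) * (selfSimilarWeight a x)⁻¹ := by
    have hq : q ≤ Real.exp (2 * x) := by simp only [q]; gcongr
    exact mul_nonneg (by linarith) (inv_pos.2 (selfSimilarWeight_pos x)).le
  have hlim : Tendsto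
      (fun y => q / 4 * scaleTail (selfSimilarWeight a) y - (selfSimilarWeight a y)⁻¹)
      atTop (𝓝 0) := by
    simpa only [mul_zero, sub_zero]
      using (tendsto_scaleTail.const_mul (q / 4)).sub (tendsto_inv_selfSimilarWeight a)
  exact sub_nonpos.1 (le_of_hasDerivAt_nonneg_of_tendsto (a := s) hderiv hderiv_nonneg hlim :)

theorem isTailWeight_selfSimilarWeight (ha : 0 < a) : IsTailWeight (selfSimilarWeight a) where
  continuous := continuous_selfSimilarWeight
  pos := selfSimilarWeight_pos
  integrable_inv := integrable_inv_selfSimilarWeight ha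
  integrableOn_mul_scaleTail s := by
    have hcont : Continuous (scaleTail (selfSimilarWeight a)) := continuous_iff_continuousAt.2
      fun x => (hasDerivAt_scaleTail_selfSimilarWeight ha x).continuousAt
    refine integrable_of_isBigO_exp_neg two_pos
      (continuous_selfSimilarWeight.mul hcont).continuousOn (Asymptotics.IsBigO.of_bound 4 ?_)
    filter_upwards [eventually_ge_atTop (Real.log (4 * a) / 2)] with x hx
    have hρ := selfSimilarWeight_pos (a := a) x
    have hdecay := scaleTail_selfSimilarWeight_le ha <|
      (Real.log_le_iff_le_exp (by positivity)).1 (show Real.log (4 * a) ≤ 2 * x by linarith)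
    rw [Real.norm_of_nonneg (mul_nonneg hρ.le (scaleTail_nonneg selfSimilarWeight_pos x)),
      Real.norm_of_nonneg (Real.exp_pos _).le, neg_mul, Real.exp_neg]
    calc selfSimilarWeight a x * scaleTail (selfSimilarWeight a) x
        = selfSimilarWeight a x * (Real.exp (2 * x) / 4 * scaleTail (selfSimilarWeight a) x) *
            (4 * (Real.exp (2 * x))⁻¹) := by field_simp
      _ ≤ selfSimilarWeight a x * (selfSimilarWeight a x)⁻¹ * (4 * (Real.exp (2 * x))⁻¹) := by
          gcongr
      _ = 4 * (Real.exp (2 * x))⁻¹ := by rw [mul_inv_cancel₀ hρ.ne', one_mul]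

end SelfSimilarWeight

section Reaction

variable {b c p : ℝ}

theorem hasDerivAt_reaction (b : ℝ) (hp : 1 ≤ p) (x : ℝ) :
    HasDerivAt (fun x => b * x - x ^ p) (b - p * x ^ (p - 1)) x :=
  (((hasDerivAt_id x).const_mul b).congr_deriv (mul_one b)).sub
    (Real.hasDerivAt_rpow_const (Or.inr hp))

theorem exists_lipschitzOnWith_reaction (b c : ℝ) (hp : 1 ≤ p) :
    ∃ L, LipschitzOnWith L (fun x => b * x - x ^ p) (Icc 0 c) := by
  have hcont : Continuous fun x : ℝ => b - p * x ^ (p - 1) :=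
    continuous_const.sub (continuous_const.mul
      (continuous_id.rpow_const fun _ => Or.inr (sub_nonneg.2 hp)))
  obtain ⟨L, hL⟩ := isCompact_Icc.exists_bound_of_continuousOn (s := Icc 0 c) hcont.continuousOn
  exact ⟨L.toNNReal, (convex_Icc 0 c).lipschitzOnWith_of_nnnorm_hasDerivWithin_le
    (fun x _ => (hasDerivAt_reaction b hp x).hasDerivWithinAt)
    fun x hx => NNReal.coe_le_coe.1 ((hL x hx).trans (Real.le_coe_toNNReal L))⟩

theorem rpow_eq_rpow_sub_one_mul (hp : p ≠ 0) {x : ℝ} (hx : 0 ≤ x) : x ^ p = x ^ (p - 1) * x := by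
  rw [← Real.rpow_add_one' hx (by rwa [sub_add_cancel]), sub_add_cancel]

theorem reaction_nonneg (hp : 1 < p) (hc : c ^ (p - 1) = b) {x : ℝ} (hx : x ∈ Icc 0 c) :
    0 ≤ b * x - x ^ p := by
  rw [rpow_eq_rpow_sub_one_mul (by linarith) hx.1, ← sub_mul, ← hc]
  exact mul_nonneg
    (sub_nonneg.2 (Real.rpow_le_rpow hx.1 hx.2 (sub_nonneg.2 hp.le))) hx.1

end Reaction

/-- A nonnegative profile `w`, with derivative `v`, that decays at `+∞`. For
`a = 2 α + 2 - n`, `b = α (α + 2 - n)` and `α = 2 / (p - 1)` the equation says that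
`|x|^(-α) w(log (|x| / √t))` solves `u_t = Δu - u^p` in dimension `n`. -/
structure IsDecayingProfile (a b p : ℝ) (w v : ℝ → ℝ) : Prop where
  hasDerivAt : ∀ s, HasDerivAt w (v s) s
  hasDerivAt_deriv : ∀ s,
    HasDerivAt v (w s ^ p - b * w s - (Real.exp (2 * s) / 2 - a) * v s) s
  nonneg : ∀ s, 0 ≤ w s
  tendsto_zero : Tendsto w atTop (𝓝 0)

namespace IsDecayingProfile

variable {a b p : ℝ} {w v : ℝ → ℝ}

theorem continuous (hw : IsDecayingProfile a b p w v) : Continuous w :=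
  continuous_iff_continuousAt.2 fun s => (hw.hasDerivAt s).continuousAt

theorem contDiff (hw : IsDecayingProfile a b p w v) (hp : 0 ≤ p) : ContDiff ℝ 2 w := by
  have hw_cont := hw.continuous
  have hv_cont : Continuous v :=
    continuous_iff_continuousAt.2 fun s => (hw.hasDerivAt_deriv s).continuousAt
  have hv : ContDiff ℝ 1 v := contDiff_one_iff_deriv.2
    ⟨fun s => (hw.hasDerivAt_deriv s).differentiableAt, by
      rw [deriv_eq hw.hasDerivAt_deriv]
      fun_prop (disch := exact fun _ => Or.inr hp)⟩
  rw [← one_add_one_eq_two, contDiff_succ_iff_deriv, deriv_eq hw.hasDerivAt]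
  exact ⟨fun s => (hw.hasDerivAt s).differentiableAt, by simp, hv⟩

theorem of_isDecayingSolution {m : ℝ → ℝ} {A : ℝ}
    (hw : IsDecayingSolution (selfSimilarWeight a) (fun x => b * x - x ^ p) A w m)
    (hw0 : ∀ s, 0 ≤ w s) :
    IsDecayingProfile a b p w fun s => -(m s * (selfSimilarWeight a s)⁻¹) where
  hasDerivAt := hw.hasDerivAt_position
  hasDerivAt_deriv s := by
    have hρ := (selfSimilarWeight_pos (a := a) s).ne'
    refine ((hw.hasDerivAt_momentum s).mul (hasDerivAt_inv_selfSimilarWeight s)).neg.congr_deriv ?_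
    field_simp
    ring
  nonneg := hw0
  tendsto_zero := hw.tendsto_position

end IsDecayingProfile

theorem exists_isDecayingProfile {a b p : ℝ} (ha : 0 < a) (hb : 0 < b) (hp : 1 < p) :
    ∃ w v : ℝ → ℝ, IsDecayingProfile a b p w v ∧ ∃ s, 0 < w s := by
  have hp' : 0 < p - 1 := sub_pos.2 hp
  set c : ℝ := b ^ (p - 1)⁻¹
  have hc : 0 < c := Real.rpow_pos_of_pos hb _
  have hcb : c ^ (p - 1) = b := Real.rpow_inv_rpow hb.le hp'.ne'
  have hp0 : p ≠ 0 := by linarith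
  obtain ⟨L, hLip⟩ := exists_lipschitzOnWith_reaction b c hp.le
  obtain ⟨A, w, m, hw, hmem, hpos⟩ :=
    (isTailWeight_selfSimilarWeight ha).exists_isDecayingSolution_mem_Icc hLip hc
      (fun _ => reaction_nonneg hp hcb) (by rw [mul_zero, Real.zero_rpow hp0, sub_zero])
      (by rw [rpow_eq_rpow_sub_one_mul hp0 hc.le, hcb, sub_self])
  exact ⟨w, _, .of_isDecayingSolution hw fun s => (hmem s).1, hpos⟩

section Radial

theorem hasFDerivAt_log_norm {E : Type*} [NormedAddCommGroup E] [InnerProductSpace ℝ E] {x : E}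
    (hx : x ≠ 0) : HasFDerivAt (fun y : E => Real.log ‖y‖) ((‖x‖ ^ 2)⁻¹ • innerSL ℝ x) x := by
  have hx' : ‖x‖ ^ 2 ≠ 0 := pow_ne_zero 2 (norm_ne_zero_iff.2 hx)
  have hlog := ((hasStrictFDerivAt_norm_sq x).hasFDerivAt.log hx').const_mul (1 / 2)
  have hhalf : (fun y : E => 1 / 2 * Real.log (‖y‖ ^ 2)) = fun y => Real.log ‖y‖ := by
    funext y
    rw [Real.log_pow]
    push_cast
    ring
  rw [hhalf] at hlog
  refine hlog.congr_fderiv ?_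
  module

variable {n : ℕ} {ψ ψ₁ ψ₂ : ℝ → ℝ} {x : EuclideanSpace ℝ (Fin n)}

theorem fderiv_radial_log_single (h₁ : ∀ l, HasDerivAt ψ (ψ₁ l) l) (hx : x ≠ 0) (i : Fin n) :
    fderiv ℝ (fun y : EuclideanSpace ℝ (Fin n) => ψ (Real.log ‖y‖)) x (EuclideanSpace.single i 1) =
      ψ₁ (Real.log ‖x‖) * (‖x‖ ^ 2)⁻¹ * x i := by
  have hψ : HasFDerivAt (fun y : EuclideanSpace ℝ (Fin n) => ψ (Real.log ‖y‖)) _ x :=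
    (h₁ _).comp_hasFDerivAt x (hasFDerivAt_log_norm hx)
  rw [hψ.fderiv]
  simp [EuclideanSpace.inner_single_right, mul_assoc]

theorem fderiv_fderiv_radial_log_single (h₁ : ∀ l, HasDerivAt ψ (ψ₁ l) l)
    (h₂ : ∀ l, HasDerivAt ψ₁ (ψ₂ l) l) (hx : x ≠ 0) (i : Fin n) :
    fderiv ℝ (fun y => fderiv ℝ (fun z : EuclideanSpace ℝ (Fin n) => ψ (Real.log ‖z‖)) y
        (EuclideanSpace.single i 1)) x (EuclideanSpace.single i 1) =
      (‖x‖ ^ 2)⁻¹ * ((ψ₂ (Real.log ‖x‖) - 2 * ψ₁ (Real.log ‖x‖)) * (‖x‖ ^ 2)⁻¹ * x i ^ 2 +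
        ψ₁ (Real.log ‖x‖)) := by
  have hfirst : (fun y => fderiv ℝ (fun z : EuclideanSpace ℝ (Fin n) => ψ (Real.log ‖z‖)) y
      (EuclideanSpace.single i 1)) =ᶠ[𝓝 x] fun y => ψ₁ (Real.log ‖y‖) * (‖y‖ ^ 2)⁻¹ * y i :=
    (isOpen_ne.eventually_mem hx).mono fun y hy => fderiv_radial_log_single h₁ hy i
  have hx' : ‖x‖ ^ 2 ≠ 0 := pow_ne_zero 2 (norm_ne_zero_iff.2 hx)
  have hψ₁ := (h₂ _).comp_hasFDerivAt x (hasFDerivAt_log_norm hx)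
  have hinv := (hasDerivAt_inv hx').comp_hasFDerivAt x (hasStrictFDerivAt_norm_sq x).hasFDerivAt
  have hcoord : HasFDerivAt (fun y : EuclideanSpace ℝ (Fin n) => y i) _ x :=
    (EuclideanSpace.proj i : EuclideanSpace ℝ (Fin n) →L[ℝ] ℝ).hasFDerivAt
  have hprod : HasFDerivAt
      (fun y : EuclideanSpace ℝ (Fin n) => ψ₁ (Real.log ‖y‖) * (‖y‖ ^ 2)⁻¹ * y i) _ x :=
    (hψ₁.mul hinv).mul hcoord
  rw [hfirst.fderiv_eq, hprod.fderiv]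
  simp only [Pi.mul_apply, Function.comp_apply, neg_smul, smul_neg, smul_add, add_apply, smul_apply,
    PiLp.proj_apply, PiLp.single_eq_same, smul_eq_mul, mul_one, neg_apply, coe_innerSL_apply,
    EuclideanSpace.inner_single_right, Real.ringHom_apply, one_mul, nsmul_eq_mul, Nat.cast_ofNat]
  field_simp
  ring

theorem laplacian_radial_log (h₁ : ∀ l, HasDerivAt ψ (ψ₁ l) l) (h₂ : ∀ l, HasDerivAt ψ₁ (ψ₂ l) l)
    (hx : x ≠ 0) : laplacian (fun y : EuclideanSpace ℝ (Fin n) => ψ (Real.log ‖y‖)) x =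
      (‖x‖ ^ 2)⁻¹ * (ψ₂ (Real.log ‖x‖) + (n - 2) * ψ₁ (Real.log ‖x‖)) := by
  have hx' : ‖x‖ ^ 2 ≠ 0 := pow_ne_zero 2 (norm_ne_zero_iff.2 hx)
  simp only [laplacian, fderiv_fderiv_radial_log_single h₁ h₂ hx]
  rw [← Finset.mul_sum, Finset.sum_add_distrib, ← Finset.mul_sum,
    ← EuclideanSpace.real_norm_sq_eq, inv_mul_cancel_right₀ hx', Finset.sum_const,
    Finset.card_univ, Fintype.card_fin, nsmul_eq_mul]
  ring

end Radial

/-- The function `|x|^(-α) w(log (|x| / √t))`, extended by zero to `t ≤ 0`. -/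
noncomputable def selfSimilarSolution {E : Type*} [Norm E] (α : ℝ) (w : ℝ → ℝ) (x : E) (t : ℝ) :
    ℝ :=
  if 0 < t then Real.exp (-α * Real.log ‖x‖) * w (Real.log ‖x‖ - Real.log t / 2) else 0

section SelfSimilarSolution

theorem selfSimilarSolution_of_pos {E : Type*} [Norm E] {t : ℝ} (ht : 0 < t) (α : ℝ) (w : ℝ → ℝ)
    (x : E) : selfSimilarSolution α w x t =
      Real.exp (-α * Real.log ‖x‖) * w (Real.log ‖x‖ - Real.log t / 2) :=
  if_pos ht

theorem selfSimilarSolution_zero {E : Type*} [Norm E] (α : ℝ) (w : ℝ → ℝ) (x : E) :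
    selfSimilarSolution α w x 0 = 0 :=
  if_neg (lt_irrefl 0)

theorem selfSimilarSolution_eventuallyEq {E : Type*} [Norm E] {t : ℝ} (ht : 0 < t) (α : ℝ)
    (w : ℝ → ℝ) (x : E) : selfSimilarSolution α w x =ᶠ[𝓝 t]
      fun r => Real.exp (-α * Real.log ‖x‖) * w (Real.log ‖x‖ - Real.log r / 2) :=
  (lt_mem_nhds ht).mono fun _ hr => selfSimilarSolution_of_pos hr α w x

section Continuity

variable {E : Type*} [NormedAddCommGroup E] {w : ℝ → ℝ} {x : E} {t : ℝ}

theorem continuousAt_selfSimilarSolution (α : ℝ) (hw : Continuous w) (hx : x ≠ 0) (ht : 0 < t) :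
    ContinuousAt (fun q : E × ℝ => selfSimilarSolution α w q.1 q.2) (x, t) := by
  have hlog : ContinuousAt (fun q : E × ℝ => Real.log ‖q.1‖) (x, t) :=
    continuousAt_fst.norm.log (norm_ne_zero_iff.2 hx)
  have hpos : ∀ᶠ q : E × ℝ in 𝓝 (x, t), 0 < q.2 := continuousAt_snd.eventually (lt_mem_nhds ht)
  refine ContinuousAt.congr ?_ (hpos.mono fun q hq => (selfSimilarSolution_of_pos hq α w q.1).symm)
  exact (continuousAt_const.mul hlog).rexp.mul
    (hw.continuousAt.comp (hlog.sub ((continuousAt_snd.log ht.ne').div_const 2)))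

theorem tendsto_selfSimilarSolution_zero (α : ℝ) (hw : Tendsto w atTop (𝓝 0)) (hx : x ≠ 0) :
    Tendsto (fun q : E × ℝ => selfSimilarSolution α w q.1 q.2) (𝓝 (x, 0)) (𝓝 0) := by
  have hlog : ContinuousAt (fun q : E × ℝ => Real.log ‖q.1‖) (x, 0) :=
    continuousAt_fst.norm.log (norm_ne_zero_iff.2 hx)
  set l : Filter (E × ℝ) := 𝓝 (x, 0) ⊓ 𝓟 {q | 0 < q.2}
  have htime : Tendsto Prod.snd l (𝓝[>] 0) := tendsto_nhdsWithin_iff.2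
    ⟨(continuousAt_snd (p := (x, (0 : ℝ)))).tendsto.mono_left inf_le_left,
      eventually_inf_principal.2 (Eventually.of_forall fun _ hq => hq)⟩
  have harg : Tendsto (fun q : E × ℝ => Real.log ‖q.1‖ - Real.log q.2 / 2) l atTop := by
    simp only [sub_eq_add_neg]
    exact (hlog.tendsto.mono_left inf_le_left).add_atTop (tendsto_neg_atBot_atTop.comp
      ((Real.tendsto_log_nhdsGT_zero.comp htime).atBot_div_const two_pos))
  have hfactor : Tendsto (fun q : E × ℝ => Real.exp (-α * Real.log ‖q.1‖)) l
      (𝓝 (Real.exp (-α * Real.log ‖x‖))) :=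
    ((continuousAt_const.mul hlog).rexp).tendsto.mono_left inf_le_left
  have hprod : Tendsto
      (fun q : E × ℝ => Real.exp (-α * Real.log ‖q.1‖) * w (Real.log ‖q.1‖ - Real.log q.2 / 2)) l
      (𝓝 0) := by
    simpa only [mul_zero, Function.comp_def] using hfactor.mul (hw.comp harg)
  exact hprod.if tendsto_const_nhds

theorem continuousOn_selfSimilarSolution (α : ℝ) (hw : Continuous w)
    (hw0 : Tendsto w atTop (𝓝 0)) :
    ContinuousOn (fun q : E × ℝ => selfSimilarSolution α w q.1 q.2) {q | q.1 ≠ 0 ∧ 0 ≤ q.2} := by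
  rintro ⟨x, t⟩ ⟨hx, ht⟩
  refine ContinuousAt.continuousWithinAt ?_
  rcases ht.eq_or_lt with rfl | ht
  · rw [ContinuousAt, selfSimilarSolution_zero]
    exact tendsto_selfSimilarSolution_zero α hw0 hx
  · exact continuousAt_selfSimilarSolution α hw hx ht

end Continuity

theorem contDiffAt_selfSimilarSolution_space {E : Type*} [NormedAddCommGroup E]
    [InnerProductSpace ℝ E] {k : WithTop ℕ∞} {w : ℝ → ℝ} (α : ℝ) (hw : ContDiff ℝ k w) {x : E}
    (hx : x ≠ 0) {t : ℝ} (ht : 0 < t) :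
    ContDiffAt ℝ k (fun y => selfSimilarSolution α w y t) x := by
  simp only [selfSimilarSolution_of_pos ht]
  have hlog : ContDiffAt ℝ k (fun y : E => Real.log ‖y‖) x :=
    (contDiffAt_norm ℝ hx).log (norm_ne_zero_iff.2 hx)
  exact (contDiffAt_const.mul hlog).exp.mul
    (hw.contDiffAt.comp x (hlog.sub contDiffAt_const))

theorem contDiffAt_selfSimilarSolution_time {E : Type*} [Norm E] {k : WithTop ℕ∞} {w : ℝ → ℝ}
    (α : ℝ) (hw : ContDiff ℝ k w) (x : E) {t : ℝ} (ht : 0 < t) :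
    ContDiffAt ℝ k (selfSimilarSolution α w x) t :=
  ContDiffAt.congr_of_eventuallyEq (contDiffAt_const.mul (hw.contDiffAt.comp t
    (contDiffAt_const.sub ((contDiffAt_id.log ht.ne').div_const 2))))
    (selfSimilarSolution_eventuallyEq ht α w x)

theorem hasDerivAt_selfSimilarSolution_time {E : Type*} [Norm E] {w v : ℝ → ℝ} (α : ℝ)
    (hw : ∀ s, HasDerivAt w (v s) s) (x : E) {t : ℝ} (ht : 0 < t) :
    HasDerivAt (selfSimilarSolution α w x)
      (-(Real.exp (-α * Real.log ‖x‖) * v (Real.log ‖x‖ - Real.log t / 2) / (2 * t))) t := by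
  refine HasDerivAt.congr_of_eventuallyEq ?_ (selfSimilarSolution_eventuallyEq ht α w x)
  refine (((hw _).comp t (((Real.hasDerivAt_log ht.ne').div_const 2).const_sub
    (Real.log ‖x‖))).const_mul _).congr_deriv ?_
  field_simp

theorem hasDerivAt_exp_mul_comp_sub {f f' : ℝ → ℝ} (hf : ∀ s, HasDerivAt f (f' s) s) (α τ l : ℝ) :
    HasDerivAt (fun l => Real.exp (-α * l) * f (l - τ))
      (Real.exp (-α * l) * (f' (l - τ) - α * f (l - τ))) l := by
  refine ((((hasDerivAt_id l).const_mul (-α)).exp).mul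
    ((hf _).comp_sub_const l τ)).congr_deriv ?_
  simp only [id]
  ring

theorem laplacian_selfSimilarSolution {n : ℕ} {w v v' : ℝ → ℝ} (α : ℝ)
    (hw : ∀ s, HasDerivAt w (v s) s) (hv : ∀ s, HasDerivAt v (v' s) s)
    {x : EuclideanSpace ℝ (Fin n)} (hx : x ≠ 0) {t s : ℝ} (ht : 0 < t)
    (hs : s = Real.log ‖x‖ - Real.log t / 2) :
    laplacian (fun y => selfSimilarSolution α w y t) x =
      Real.exp (-α * Real.log ‖x‖) * (‖x‖ ^ 2)⁻¹ *
        (v' s - (2 * α + 2 - n) * v s + α * (α + 2 - n) * w s) := by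
  simp only [selfSimilarSolution_of_pos ht]
  rw [laplacian_radial_log (hasDerivAt_exp_mul_comp_sub hw α _) (hasDerivAt_exp_mul_comp_sub
    (fun r => (hv r).sub ((hw r).const_mul α)) α _) hx, ← hs]
  simp only [Pi.sub_apply]
  ring

theorem selfSimilarSolution_rpow {E : Type*} [NormedAddCommGroup E] {α p : ℝ}
    (hα : α * (p - 1) = 2) {w : ℝ → ℝ} (hw : ∀ s, 0 ≤ w s) {x : E} (hx : x ≠ 0) {t : ℝ}
    (ht : 0 < t) : selfSimilarSolution α w x t ^ p =
      Real.exp (-α * Real.log ‖x‖) * (‖x‖ ^ 2)⁻¹ * w (Real.log ‖x‖ - Real.log t / 2) ^ p := by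
  have hexponent : -α * Real.log ‖x‖ * p = -α * Real.log ‖x‖ - (2 : ℕ) * Real.log ‖x‖ := by
    push_cast
    linear_combination -Real.log ‖x‖ * hα
  rw [selfSimilarSolution_of_pos ht, Real.mul_rpow (Real.exp_pos _).le (hw _), ← Real.exp_mul,
    hexponent, Real.exp_sub, Real.exp_nat_mul, Real.exp_log (norm_pos_iff.2 hx), div_eq_mul_inv]

theorem exp_two_mul_log_norm_sub {E : Type*} [NormedAddCommGroup E] {x : E} (hx : x ≠ 0) {t : ℝ}
    (ht : 0 < t) : Real.exp (2 * (Real.log ‖x‖ - Real.log t / 2)) = ‖x‖ ^ 2 / t := by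
  rw [mul_sub, mul_div_cancel₀ _ two_ne_zero, Real.exp_sub, Real.exp_log ht, ← Nat.cast_two,
    Real.exp_nat_mul, Real.exp_log (norm_pos_iff.2 hx)]

end SelfSimilarSolution

theorem IsDecayingProfile.isClassicalSolution {n : ℕ} {α p : ℝ} {w v : ℝ → ℝ}
    (hw : IsDecayingProfile (2 * α + 2 - n) (α * (α + 2 - n)) p w v) (hα : α * (p - 1) = 2)
    (hp : 0 ≤ p) : IsClassicalSolution n p (fun _ => 0) (selfSimilarSolution α w) where
  continuousOn := continuousOn_selfSimilarSolution α hw.continuous hw.tendsto_zero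
  contDiff_space _ hx _ ht := contDiffAt_selfSimilarSolution_space α (hw.contDiff hp) hx ht
  contDiff_time x _ _ ht :=
    contDiffAt_selfSimilarSolution_time α ((hw.contDiff hp).of_le one_le_two) x ht
  pde x hx t ht := by
    have hx' : ‖x‖ ≠ 0 := norm_ne_zero_iff.2 hx
    rw [(hasDerivAt_selfSimilarSolution_time α hw.hasDerivAt x ht).deriv,
      laplacian_selfSimilarSolution α hw.hasDerivAt hw.hasDerivAt_deriv hx ht rfl,
      selfSimilarSolution_rpow hα hw.nonneg hx ht, exp_two_mul_log_norm_sub hx ht]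
    field_simp
    ring
  nonneg x _ t ht := by
    rw [selfSimilarSolution_of_pos ht]
    exact mul_nonneg (Real.exp_pos _).le (hw.nonneg _)
  initial x _ := selfSimilarSolution_zero α w x

end

/-- The bound on `p` is the range in which `c |x|^(-2 / (p - 1))` is a stationary solution for some
`c > 0`; it reads `p < n / (n - 2)` when `n ≥ 3`. -/
theorem nonuniqueness_in_punctured_plane_general {n : ℕ} (hn : 0 < n) {p : ℝ} (hp : 1 < p)
    (hnp : ((n : ℝ) - 2) * (p - 1) < 2) :
    ∃ u : EuclideanSpace ℝ (Fin n) → ℝ → ℝ,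
      IsClassicalSolution n p (fun _ => 0) u ∧
      ∃ x : EuclideanSpace ℝ (Fin n), x ≠ 0 ∧ ∃ t : ℝ, 0 ≤ t ∧ u x t ≠ 0 := by
  have hp' : 0 < p - 1 := sub_pos.2 hp
  set α : ℝ := 2 / (p - 1)
  have hα : 0 < α := div_pos two_pos hp'
  have hαn : 0 < α + 2 - n := by
    have : (n : ℝ) - 2 < α := (lt_div_iff₀ hp').2 hnp
    linarith
  obtain ⟨w, v, hw, s, hs⟩ := exists_isDecayingProfile (a := 2 * α + 2 - n)
    (b := α * (α + 2 - n)) (by linarith) (mul_pos hα hαn) hp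
  refine ⟨selfSimilarSolution α w,
    hw.isClassicalSolution (div_mul_cancel₀ _ hp'.ne') (by linarith),
    EuclideanSpace.single ⟨0, hn⟩ (Real.exp s), ?_, 1, zero_le_one, ?_⟩
  · simp
  · rw [selfSimilarSolution_of_pos one_pos]
    simpa using hs.ne'

/-- for `n = 2` and any `p > 1`, there is a nontrivial classical
solution of (P) in the punctured plane with vanishing initial data. -/
theorem nonuniqueness_in_punctured_plane (p : ℝ) (hp : 1 < p) :
    ∃ u : EuclideanSpace ℝ (Fin 2) → ℝ → ℝ,
      IsClassicalSolution 2 p (fun _ => 0) u ∧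
      ∃ x : EuclideanSpace ℝ (Fin 2), x ≠ 0 ∧ ∃ t : ℝ, 0 ≤ t ∧ u x t ≠ 0 :=
  nonuniqueness_in_punctured_plane_general two_pos hp (by norm_num)
end

section
/- Let n ≥ 2 be an integer and let p > 1 satisfy n < 2p/(p−1). Then there exists a nontrivial radial classical solution with vanishing initial data: there exists a function u : (0,∞) × [0,∞) → ℝ, continuous on (0,∞) × [0,∞), C² in r and C¹ in t on (0,∞) × (0,∞), satisfying u_t = u_rr + ((n−1)/r) u_r − u^p and u ≥ 0 on (0,∞) × (0,∞), with u(r,0) = 0 for all r > 0, such that u is not identically zero. -/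
/-!
The self-similar ansatz `u(r, t) = r^(-α) w(log (r / √t))` with `α = 2 / (p - 1)` turns the equation
into `w'' + (e^(2s) / 2 - m) w' + k w = w ^ p`, where `m = 2α + 2 - n` and `k = α (α + 2 - n)` are
positive because `n < 2p / (p - 1) = α + 2`. A bounded positive profile `w` that vanishes at
`+∞` gives a solution with zero initial data, since `log (r / √t) → +∞` as `t → 0`.

Such a profile lies between explicit barriers `δ exp (-(a e^(ms) + e^(2s) / 4))` and
`C exp (-e^(2s) / 8)`. After subtracting a large zeroth-order term the linear part factors into two
first-order operators, each with an order-preserving inverse on bounded functions, so the profile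
equation becomes a monotone fixed-point problem on the order interval between the barriers.
-/

open Real Set Filter Topology MeasureTheory

namespace RadialHeat

section FirstOrder

/-- Coefficients `ρ` for which `u' = ρ u` has exponential growth, so that `u' = ρ u - h` has at
most one bounded solution. -/
structure IsGrowthRate (ρ : ℝ → ℝ) : Prop where
  continuous : Continuous ρ
  exists_pos_le : ∃ γ > 0, ∀ s, γ ≤ ρ s

/-- The class of source terms `h` for which `u' = ρ u - h` has a bounded solution, obtained by
integrating from `+∞`. -/
structure IsDominated (ρ h : ℝ → ℝ) : Prop where
  measurable : Measurable h
  exists_abs_le : ∃ M, ∀ s, |h s| ≤ M * ρ s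

/-- The integrating factor `exp (-∫₀ˢ ρ)` of the equation `u' = ρ u - h`. -/
noncomputable def integratingFactor (ρ : ℝ → ℝ) (s : ℝ) : ℝ := exp (-∫ x in 0..s, ρ x)

/-- The bounded solution of `u' = ρ u - h`, for a growth rate `ρ` and a dominated source `h`. -/
noncomputable def boundedSolution (ρ h : ℝ → ℝ) (s : ℝ) : ℝ :=
  (integratingFactor ρ s)⁻¹ * ∫ σ in Ioi s, integratingFactor ρ σ * h σ

variable {ρ h h₁ h₂ u u' v v' : ℝ → ℝ}

lemma IsGrowthRate.pos (hρ : IsGrowthRate ρ) (s : ℝ) : 0 < ρ s := by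
  obtain ⟨γ, hγ, hle⟩ := hρ.exists_pos_le
  exact hγ.trans_le (hle s)

lemma IsGrowthRate.comp_neg (hρ : IsGrowthRate ρ) : IsGrowthRate fun s => ρ (-s) where
  continuous := hρ.continuous.comp continuous_neg
  exists_pos_le := hρ.exists_pos_le.imp fun _ hγ => ⟨hγ.1, fun s => hγ.2 (-s)⟩

lemma isGrowthRate_const {β : ℝ} (hβ : 0 < β) : IsGrowthRate fun _ => β where
  continuous := continuous_const
  exists_pos_le := ⟨β, hβ, fun _ => le_rfl⟩

lemma IsDominated.comp_neg (hh : IsDominated ρ h) :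
    IsDominated (fun s => ρ (-s)) fun s => h (-s) where
  measurable := hh.measurable.comp measurable_neg
  exists_abs_le := hh.exists_abs_le.imp fun _ hM s => hM (-s)

lemma integratingFactor_pos (ρ : ℝ → ℝ) (s : ℝ) : 0 < integratingFactor ρ s := exp_pos _

lemma hasDerivAt_integratingFactor (hρ : Continuous ρ) (s : ℝ) :
    HasDerivAt (integratingFactor ρ) (-(ρ s * integratingFactor ρ s)) s := by
  have hint : HasDerivAt (fun s => ∫ x in 0..s, ρ x) (ρ s) s :=
    (hρ.integral_hasStrictDerivAt 0 s).hasDerivAt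
  exact hint.neg.exp.congr_deriv (by rw [mul_neg, mul_comm]; rfl)

lemma continuous_integratingFactor (hρ : Continuous ρ) : Continuous (integratingFactor ρ) :=
  continuous_iff_continuousAt.2 fun s => (hasDerivAt_integratingFactor hρ s).continuousAt

lemma IsGrowthRate.tendsto_integratingFactor (hρ : IsGrowthRate ρ) :
    Tendsto (integratingFactor ρ) atTop (𝓝 0) := by
  obtain ⟨γ, hγ, hle⟩ := hρ.exists_pos_le
  refine tendsto_exp_neg_atTop_nhds_zero.comp
    (tendsto_atTop_mono' _ ?_ (tendsto_id.const_mul_atTop hγ))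
  filter_upwards [eventually_ge_atTop 0] with s hs
  have hmono : ∫ _ in 0..s, γ ≤ ∫ x in 0..s, ρ x := intervalIntegral.integral_mono_on hs
    intervalIntegrable_const (hρ.continuous.intervalIntegrable _ _) fun x _ => hle x
  simpa [mul_comm] using hmono

lemma IsGrowthRate.integrableOn_mul_integratingFactor (hρ : IsGrowthRate ρ) (a : ℝ) :
    IntegrableOn (fun s => ρ s * integratingFactor ρ s) (Ioi a) := by
  have hderiv := integrableOn_Ioi_deriv_of_nonpos'
    (fun s (_ : s ∈ Ici a) => hasDerivAt_integratingFactor hρ.continuous s)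
    (fun s _ => neg_nonpos.2 (mul_pos (hρ.pos s) (integratingFactor_pos ρ s)).le)
    hρ.tendsto_integratingFactor
  simpa using hderiv.neg

lemma IsGrowthRate.integral_mul_integratingFactor (hρ : IsGrowthRate ρ) (a : ℝ) :
    ∫ s in Ioi a, ρ s * integratingFactor ρ s = integratingFactor ρ a := by
  have hderiv := integral_Ioi_of_hasDerivAt_of_tendsto'
    (fun s (_ : s ∈ Ici a) => hasDerivAt_integratingFactor hρ.continuous s)
    (hρ.integrableOn_mul_integratingFactor a).neg hρ.tendsto_integratingFactor
  rwa [integral_neg, zero_sub, neg_inj] at hderiv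

lemma abs_integratingFactor_mul_le {M s : ℝ} (hM : |h s| ≤ M * ρ s) :
    |integratingFactor ρ s * h s| ≤ M * (ρ s * integratingFactor ρ s) := by
  rw [abs_mul, abs_of_pos (integratingFactor_pos ρ s), ← mul_assoc, mul_comm]
  exact mul_le_mul_of_nonneg_right hM (integratingFactor_pos ρ s).le

lemma IsDominated.integrableOn (hh : IsDominated ρ h) (hρ : IsGrowthRate ρ) (a : ℝ) :
    IntegrableOn (fun s => integratingFactor ρ s * h s) (Ioi a) := by
  obtain ⟨M, hM⟩ := hh.exists_abs_le
  exact ((hρ.integrableOn_mul_integratingFactor a).const_mul M).mono'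
    ((continuous_integratingFactor hρ.continuous).measurable.mul hh.measurable).aestronglyMeasurable
    (ae_of_all _ fun s => abs_integratingFactor_mul_le (hM s))

lemma IsDominated.exists_abs_boundedSolution_le (hh : IsDominated ρ h) (hρ : IsGrowthRate ρ) :
    ∃ M, ∀ s, |boundedSolution ρ h s| ≤ M := by
  obtain ⟨M, hM⟩ := hh.exists_abs_le
  refine ⟨M, fun s => ?_⟩
  have hint : |∫ σ in Ioi s, integratingFactor ρ σ * h σ| ≤ M * integratingFactor ρ s := by
    rw [← hρ.integral_mul_integratingFactor s, ← integral_const_mul]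
    exact norm_integral_le_of_norm_le (f := fun σ => integratingFactor ρ σ * h σ)
      ((hρ.integrableOn_mul_integratingFactor s).const_mul M)
      (ae_of_all _ fun σ => abs_integratingFactor_mul_le (hM σ))
  have hpos := integratingFactor_pos ρ s
  rwa [boundedSolution, abs_mul, abs_inv, abs_of_pos hpos, inv_mul_le_iff₀ hpos, mul_comm _ M]

lemma IsDominated.boundedSolution_mono (hh₁ : IsDominated ρ h₁) (hh₂ : IsDominated ρ h₂)
    (hρ : IsGrowthRate ρ) (hle : h₁ ≤ h₂) : boundedSolution ρ h₁ ≤ boundedSolution ρ h₂ :=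
  fun s => mul_le_mul_of_nonneg_left
    (integral_mono (hh₁.integrableOn hρ s) (hh₂.integrableOn hρ s) fun σ =>
      mul_le_mul_of_nonneg_left (hle σ) (integratingFactor_pos ρ σ).le)
    (inv_pos.2 (integratingFactor_pos ρ s)).le

lemma integral_Ioi_eq_sub_intervalIntegral {f : ℝ → ℝ} (hf : ∀ a, IntegrableOn f (Ioi a))
    (a b : ℝ) :
    ∫ x in Ioi b, f x = (∫ x in Ioi a, f x) - ∫ x in a..b, f x := by
  rw [← intervalIntegral.integral_interval_add_Ioi (hf a) (hf b), add_sub_cancel_left]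

lemma IsDominated.continuous_boundedSolution (hh : IsDominated ρ h) (hρ : IsGrowthRate ρ) :
    Continuous (boundedSolution ρ h) := by
  have hint := hh.integrableOn hρ
  refine ((continuous_integratingFactor hρ.continuous).inv₀ fun s =>
    (integratingFactor_pos ρ s).ne').mul ?_
  rw [funext (integral_Ioi_eq_sub_intervalIntegral hint 0)]
  exact continuous_const.sub (intervalIntegral.continuous_primitive (fun a b =>
    ⟨(hint a).mono_set Ioc_subset_Ioi_self, (hint b).mono_set Ioc_subset_Ioi_self⟩) 0)

lemma IsDominated.hasDerivAt_boundedSolution (hh : IsDominated ρ h) (hρ : IsGrowthRate ρ)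
    (hc : Continuous h) (s : ℝ) :
    HasDerivAt (boundedSolution ρ h) (ρ s * boundedSolution ρ h s - h s) s := by
  have hne := (integratingFactor_pos ρ s).ne'
  have htail : HasDerivAt (fun s => ∫ σ in Ioi s, integratingFactor ρ σ * h σ)
      (-(integratingFactor ρ s * h s)) s := by
    rw [funext (integral_Ioi_eq_sub_intervalIntegral (hh.integrableOn hρ) 0)]
    exact (((continuous_integratingFactor hρ.continuous).mul
      hc).integral_hasStrictDerivAt 0 s).hasDerivAt.const_sub _
  refine (((hasDerivAt_integratingFactor hρ.continuous s).inv hne).mul htail).congr_deriv ?_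
  simp only [boundedSolution, Pi.inv_apply]
  field_simp
  ring

lemma IsGrowthRate.le_of_deriv_sub_mul_le (hρ : IsGrowthRate ρ)
    (hu : ∀ s, HasDerivAt u (u' s) s) (hv : ∀ s, HasDerivAt v (v' s) s)
    (hub : ∃ B, ∀ s, |u s| ≤ B) (hvb : ∃ B, ∀ s, |v s| ≤ B)
    (hle : ∀ s, v' s - ρ s * v s ≤ u' s - ρ s * u s) : u ≤ v := by
  obtain ⟨B, hB⟩ := hub
  obtain ⟨B', hB'⟩ := hvb
  set W := integratingFactor ρ
  have hderiv (s : ℝ) : HasDerivAt (fun s => W s * (u s - v s))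
      (W s * ((u' s - ρ s * u s) - (v' s - ρ s * v s))) s :=
    ((hasDerivAt_integratingFactor hρ.continuous s).mul ((hu s).sub (hv s))).congr_deriv
      (by simp only [Pi.sub_apply]; ring)
  have hmono : Monotone fun s => W s * (u s - v s) := by
    refine monotone_of_deriv_nonneg (fun s => (hderiv s).differentiableAt) fun s => ?_
    rw [(hderiv s).deriv]
    exact mul_nonneg (integratingFactor_pos ρ s).le (sub_nonneg.2 (hle s))
  have hlim : Tendsto (fun s => W s * (u s - v s)) atTop (𝓝 0) :=
    hρ.tendsto_integratingFactor.zero_mul_isBoundedUnder_le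
      (isBoundedUnder_of ⟨B + B', fun s => (abs_sub _ _).trans (add_le_add (hB s) (hB' s))⟩)
  intro s
  exact sub_nonpos.1 (nonpos_of_mul_nonpos_right (hmono.ge_of_tendsto hlim s)
    (integratingFactor_pos ρ s))

lemma IsGrowthRate.le_of_deriv_add_mul_le (hρ : IsGrowthRate ρ)
    (hu : ∀ s, HasDerivAt u (u' s) s) (hv : ∀ s, HasDerivAt v (v' s) s)
    (hub : ∃ B, ∀ s, |u s| ≤ B) (hvb : ∃ B, ∀ s, |v s| ≤ B)
    (hle : ∀ s, u' s + ρ s * u s ≤ v' s + ρ s * v s) : u ≤ v := by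
  have hreflect {f f' : ℝ → ℝ} (hf : ∀ s, HasDerivAt f (f' s) s) (s : ℝ) :
      HasDerivAt (fun s => f (-s)) (-f' (-s)) s :=
    ((hf (-s)).comp s (hasDerivAt_neg s)).congr_deriv (by ring)
  have hle_neg := hρ.comp_neg.le_of_deriv_sub_mul_le (hreflect hu) (hreflect hv)
    (hub.imp fun _ hB s => hB (-s)) (hvb.imp fun _ hB s => hB (-s))
    fun s => by linarith [hle (-s)]
  exact fun s => by simpa using hle_neg (-s)

end FirstOrder

section SecondOrder

/-- Bounded functions `u` with a bounded first derivative `u₁` and a second derivative `u₂`. -/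
structure IsBoundedC2 (u u₁ u₂ : ℝ → ℝ) : Prop where
  hasDerivAt : ∀ s, HasDerivAt u (u₁ s) s
  hasDerivAt_deriv : ∀ s, HasDerivAt u₁ (u₂ s) s
  exists_abs_le : ∃ B, ∀ s, |u s| ≤ B
  exists_abs_deriv_le : ∃ B, ∀ s, |u₁ s| ≤ B

/-- The bounded solution of `g' + ρ g = h`, obtained from `boundedSolution` by reflection. -/
noncomputable def forwardSolution (ρ h : ℝ → ℝ) (s : ℝ) : ℝ :=
  boundedSolution (fun x => ρ (-x)) (fun x => h (-x)) (-s)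

/-- The bounded solution `w` of `w'' + (ρ - β) w' - β ρ w = -h`. The operator on the left factors as
`(∂ + ρ) (∂ - β)`, and the two factors are inverted one after the other. -/
noncomputable def green (ρ : ℝ → ℝ) (β : ℝ) (h : ℝ → ℝ) : ℝ → ℝ :=
  boundedSolution (fun _ => β) (forwardSolution ρ h)

variable {ρ h h₁ h₂ u u₁ u₂ v v₁ v₂ : ℝ → ℝ} {β : ℝ}

lemma IsBoundedC2.continuous (hu : IsBoundedC2 u u₁ u₂) : Continuous u :=
  continuous_iff_continuousAt.2 fun s => (hu.hasDerivAt s).continuousAt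

lemma IsDominated.exists_abs_forwardSolution_le (hh : IsDominated ρ h) (hρ : IsGrowthRate ρ) :
    ∃ M, ∀ s, |forwardSolution ρ h s| ≤ M :=
  (hh.comp_neg.exists_abs_boundedSolution_le hρ.comp_neg).imp fun _ hM s => hM (-s)

lemma IsDominated.continuous_forwardSolution (hh : IsDominated ρ h) (hρ : IsGrowthRate ρ) :
    Continuous (forwardSolution ρ h) :=
  (hh.comp_neg.continuous_boundedSolution hρ.comp_neg).comp continuous_neg

lemma IsDominated.forwardSolution_mono (hh₁ : IsDominated ρ h₁) (hh₂ : IsDominated ρ h₂)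
    (hρ : IsGrowthRate ρ) (hle : h₁ ≤ h₂) : forwardSolution ρ h₁ ≤ forwardSolution ρ h₂ :=
  fun s => hh₁.comp_neg.boundedSolution_mono hh₂.comp_neg hρ.comp_neg (fun x => hle (-x)) (-s)

lemma IsDominated.hasDerivAt_forwardSolution (hh : IsDominated ρ h) (hρ : IsGrowthRate ρ)
    (hc : Continuous h) (s : ℝ) :
    HasDerivAt (forwardSolution ρ h) (h s - ρ s * forwardSolution ρ h s) s := by
  have hderiv := hh.comp_neg.hasDerivAt_boundedSolution hρ.comp_neg (hc.comp continuous_neg) (-s)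
  refine (hderiv.comp s (hasDerivAt_neg s)).congr_deriv ?_
  simp only [forwardSolution, neg_neg]
  ring

lemma IsDominated.isDominated_forwardSolution (hh : IsDominated ρ h) (hρ : IsGrowthRate ρ)
    (hβ : 0 < β) : IsDominated (fun _ => β) (forwardSolution ρ h) where
  measurable := (hh.continuous_forwardSolution hρ).measurable
  exists_abs_le := by
    obtain ⟨M, hM⟩ := hh.exists_abs_forwardSolution_le hρ
    exact ⟨M / β, fun s => (hM s).trans_eq (div_mul_cancel₀ M hβ.ne').symm⟩

lemma IsDominated.continuous_green (hh : IsDominated ρ h) (hρ : IsGrowthRate ρ) (hβ : 0 < β) :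
    Continuous (green ρ β h) :=
  (hh.isDominated_forwardSolution hρ hβ).continuous_boundedSolution (isGrowthRate_const hβ)

lemma IsDominated.green_mono (hh₁ : IsDominated ρ h₁) (hh₂ : IsDominated ρ h₂)
    (hρ : IsGrowthRate ρ) (hβ : 0 < β) (hle : h₁ ≤ h₂) : green ρ β h₁ ≤ green ρ β h₂ :=
  (hh₁.isDominated_forwardSolution hρ hβ).boundedSolution_mono
    (hh₂.isDominated_forwardSolution hρ hβ) (isGrowthRate_const hβ)
    (hh₁.forwardSolution_mono hh₂ hρ hle)

lemma IsDominated.isBoundedC2_green (hh : IsDominated ρ h) (hρ : IsGrowthRate ρ) (hβ : 0 < β)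
    (hc : Continuous h) :
    ∃ w₁, IsBoundedC2 (green ρ β h) w₁
      fun s => β * ρ s * green ρ β h s - (ρ s - β) * w₁ s - h s := by
  have hg := hh.isDominated_forwardSolution hρ hβ
  obtain ⟨B, hB⟩ := hg.exists_abs_boundedSolution_le (isGrowthRate_const hβ)
  obtain ⟨M, hM⟩ := hh.exists_abs_forwardSolution_le hρ
  have hderiv (s : ℝ) : HasDerivAt (green ρ β h) (β * green ρ β h s - forwardSolution ρ h s) s :=
    hg.hasDerivAt_boundedSolution (isGrowthRate_const hβ) (hh.continuous_forwardSolution hρ) s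
  refine ⟨_, hderiv, fun s => ?_, ⟨B, hB⟩, ⟨β * B + M, fun s => ?_⟩⟩
  · refine (((hderiv s).const_mul β).sub (hh.hasDerivAt_forwardSolution hρ hc s)).congr_deriv ?_
    ring
  · refine (abs_sub _ _).trans (add_le_add ?_ (hM s))
    rw [abs_mul, abs_of_pos hβ]
    exact mul_le_mul_of_nonneg_left (hB s) hβ.le

lemma IsBoundedC2.le_of_operator_le (hu : IsBoundedC2 u u₁ u₂) (hv : IsBoundedC2 v v₁ v₂)
    (hρ : IsGrowthRate ρ) (hβ : 0 < β)
    (hle : ∀ s, v₂ s + (ρ s - β) * v₁ s - β * ρ s * v s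
      ≤ u₂ s + (ρ s - β) * u₁ s - β * ρ s * u s) : u ≤ v := by
  have hderiv {f f₁ f₂ : ℝ → ℝ} (hf : IsBoundedC2 f f₁ f₂) (s : ℝ) :
      HasDerivAt (fun s => β * f s - f₁ s) (β * f₁ s - f₂ s) s :=
    ((hf.hasDerivAt s).const_mul β).sub (hf.hasDerivAt_deriv s)
  have hbound {f f₁ f₂ : ℝ → ℝ} (hf : IsBoundedC2 f f₁ f₂) : ∃ B, ∀ s, |β * f s - f₁ s| ≤ B := by
    obtain ⟨B, hB⟩ := hf.exists_abs_le
    obtain ⟨B₁, hB₁⟩ := hf.exists_abs_deriv_le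
    refine ⟨β * B + B₁, fun s => (abs_sub _ _).trans (add_le_add ?_ (hB₁ s))⟩
    rw [abs_mul, abs_of_pos hβ]
    exact mul_le_mul_of_nonneg_left (hB s) hβ.le
  have hfirst : (fun s => β * u s - u₁ s) ≤ fun s => β * v s - v₁ s :=
    hρ.le_of_deriv_add_mul_le (hderiv hu) (hderiv hv) (hbound hu) (hbound hv)
      fun s => by linarith [hle s]
  exact (isGrowthRate_const hβ).le_of_deriv_sub_mul_le hu.hasDerivAt hv.hasDerivAt
    hu.exists_abs_le hv.exists_abs_le fun s => by linarith [hfirst s]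

end SecondOrder

section SubSuperSolution

/-- Knaster–Tarski for operators whose values are continuous: the fixed point is the supremum of
the continuous `u` with `u ≤ T u`, which is measurable because it is lower semicontinuous. -/
lemma exists_fixedPoint_mem_Icc {X : Type*} [TopologicalSpace X] [MeasurableSpace X]
    [OpensMeasurableSpace X] {T : (X → ℝ) → X → ℝ} {v V : X → ℝ} (hv : Continuous v)
    (hV : Continuous V) (hvV : v ≤ V) (hT : ∀ w, Measurable w → w ∈ Icc v V → Continuous (T w))
    (hmono : MonotoneOn T {w | Measurable w ∧ w ∈ Icc v V}) (hsub : v ≤ T v) (hsuper : T V ≤ V) :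
    ∃ w ∈ Icc v V, Continuous w ∧ T w = w := by
  set S : Set (X → ℝ) := {u | Continuous u ∧ u ∈ Icc v V ∧ u ≤ T u}
  have hvS : v ∈ S := ⟨hv, ⟨le_rfl, hvV⟩, hsub⟩
  have hbdd : BddAbove S := ⟨V, fun u hu => hu.2.1.2⟩
  set w : X → ℝ := sSup S
  have hmem : w ∈ Icc v V := ⟨le_csSup hbdd hvS, csSup_le ⟨v, hvS⟩ fun u hu => hu.2.1.2⟩
  have hmeas : Measurable w := by
    have hlsc : LowerSemicontinuous fun x => ⨆ u : S, u.1 x := lowerSemicontinuous_ciSup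
      (fun x => ⟨V x, by rintro _ ⟨u, rfl⟩; exact u.2.2.1.2 x⟩) fun u => u.2.1.lowerSemicontinuous
    exact (funext fun x => sSup_apply : w = _) ▸ hlsc.measurable
  have hle : w ≤ T w := csSup_le ⟨v, hvS⟩ fun u hu => hu.2.2.trans
    (hmono ⟨hu.1.measurable, hu.2.1⟩ ⟨hmeas, hmem⟩ (le_csSup hbdd hu))
  have hTcont : Continuous (T w) := hT w hmeas hmem
  have hTmem : T w ∈ Icc v V := ⟨hmem.1.trans hle,
    (hmono ⟨hmeas, hmem⟩ ⟨hV.measurable, hvV, le_rfl⟩ hmem.2).trans hsuper⟩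
  have hTS : T w ∈ S :=
    ⟨hTcont, hTmem, hmono ⟨hmeas, hmem⟩ ⟨hTcont.measurable, hTmem⟩ hle⟩
  have heq : T w = w := (le_csSup hbdd hTS).antisymm hle
  exact ⟨w, hmem, heq ▸ hTcont, heq⟩

variable {f : ℝ → ℝ} {ρ w w₁ w₂ : ℝ → ℝ} {β K : ℝ}

/-- The reaction term shifted by `β ρ w`. Fixed points of `green ρ β ∘ shiftedSource f ρ β` solve
`w'' + (ρ - β) w' + f(w) = 0`, and a large shift makes this operator monotone. -/
noncomputable def shiftedSource (f ρ : ℝ → ℝ) (β : ℝ) (w : ℝ → ℝ) (s : ℝ) : ℝ :=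
  f (w s) + β * ρ s * w s

lemma continuous_shiftedSource (hf : Continuous f) (hρ : Continuous ρ) (hw : Continuous w) :
    Continuous (shiftedSource f ρ β w) := by
  unfold shiftedSource
  fun_prop

lemma isDominated_shiftedSource (hf : Continuous f) (hρ : IsGrowthRate ρ) (hβ : 0 < β)
    (hw : Measurable w) (hwb : ∃ B, ∀ s, |w s| ≤ B) :
    IsDominated ρ (shiftedSource f ρ β w) where
  measurable := (hf.measurable.comp hw).add ((hρ.continuous.measurable.const_mul β).mul hw)
  exists_abs_le := by
    obtain ⟨B, hB⟩ := hwb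
    obtain ⟨γ, hγ, hle⟩ := hρ.exists_pos_le
    obtain ⟨M, hM⟩ := isCompact_Icc.exists_bound_of_continuousOn (s := Icc (-B) B) hf.continuousOn
    refine ⟨M / γ + β * B, fun s => ?_⟩
    have hreaction : |f (w s)| ≤ M / γ * ρ s := by
      have hMs : |f (w s)| ≤ M := hM _ (abs_le.1 (hB s))
      rw [div_mul_eq_mul_div, le_div_iff₀ hγ]
      exact mul_le_mul hMs (hle s) hγ.le ((abs_nonneg _).trans hMs)
    have hshift : |β * ρ s * w s| ≤ β * ρ s * B := by
      have hpos := mul_pos hβ (hρ.pos s)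
      rw [abs_mul, abs_of_pos hpos]
      exact mul_le_mul_of_nonneg_left (hB s) hpos.le
    calc |shiftedSource f ρ β w s| ≤ |f (w s)| + |β * ρ s * w s| := abs_add_le _ _
      _ ≤ (M / γ + β * B) * ρ s := by linarith

lemma shiftedSource_le_shiftedSource {I : Set ℝ} {s : ℝ}
    (hf : MonotoneOn (fun x => f x + K * x) I) (hK : K ≤ β * ρ s) (h₁ : w₁ s ∈ I) (h₂ : w₂ s ∈ I)
    (hle : w₁ s ≤ w₂ s) : shiftedSource f ρ β w₁ s ≤ shiftedSource f ρ β w₂ s := by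
  have hmono := hf h₁ h₂ hle
  have hshift := mul_le_mul_of_nonneg_right hK (sub_nonneg.2 hle)
  simp only [shiftedSource] at hmono ⊢
  linarith

lemma exists_isGrowthRate_shift {a : ℝ → ℝ} (ha : Continuous a) (hab : BddBelow (range a))
    (K : ℝ) : ∃ β > 0, IsGrowthRate (fun s => a s + β) ∧ ∀ s, K ≤ β * (a s + β) := by
  obtain ⟨A, hA⟩ := hab
  have hlower (s : ℝ) : A ≤ a s := hA (mem_range_self s)
  have hβ : 1 ≤ max 1 |K| + |A| := by linarith [le_max_left 1 |K|, abs_nonneg A]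
  have hβK : K ≤ max 1 |K| + |A| := by linarith [le_max_right 1 |K|, le_abs_self K, abs_nonneg A]
  have hrate (s : ℝ) : 1 ≤ a s + (max 1 |K| + |A|) := by
    linarith [hlower s, neg_abs_le A, le_max_left 1 |K|]
  exact ⟨max 1 |K| + |A|, one_pos.trans_le hβ, ⟨by fun_prop, 1, one_pos, hrate⟩,
    fun s => hβK.trans (le_mul_of_one_le_right (zero_le_one.trans hβ) (hrate s))⟩

theorem exists_solution_between {a v v₁ v₂ V V₁ V₂ : ℝ → ℝ} (ha : Continuous a)
    (hab : BddBelow (range a)) (hf : Continuous f) (hv : IsBoundedC2 v v₁ v₂)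
    (hV : IsBoundedC2 V V₁ V₂) (hvV : v ≤ V)
    (hmono : ∀ s, MonotoneOn (fun x => f x + K * x) (Icc (v s) (V s)))
    (hsub : ∀ s, 0 ≤ v₂ s + a s * v₁ s + f (v s))
    (hsuper : ∀ s, V₂ s + a s * V₁ s + f (V s) ≤ 0) :
    ∃ w ∈ Icc v V, ∃ w' : ℝ → ℝ, (∀ s, HasDerivAt w (w' s) s) ∧
      ∀ s, HasDerivAt w' (-(a s * w' s) - f (w s)) s := by
  obtain ⟨β, hβ, hρ, hK⟩ := exists_isGrowthRate_shift ha hab K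
  set ρ : ℝ → ℝ := fun s => a s + β with hρa
  have hdom (w : ℝ → ℝ) (hw : Measurable w) (hwm : w ∈ Icc v V) :
      IsDominated ρ (shiftedSource f ρ β w) := by
    obtain ⟨B, hB⟩ := hv.exists_abs_le
    obtain ⟨B', hB'⟩ := hV.exists_abs_le
    exact isDominated_shiftedSource hf hρ hβ hw ⟨max B B', fun s =>
      (abs_le_max_abs_abs (hwm.1 s) (hwm.2 s)).trans (max_le_max (hB s) (hB' s))⟩
  have hC2 (w : ℝ → ℝ) (hw : Continuous w) (hwm : w ∈ Icc v V) :=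
    (hdom w hw.measurable hwm).isBoundedC2_green hρ hβ
      (continuous_shiftedSource hf hρ.continuous hw)
  set T : (ℝ → ℝ) → ℝ → ℝ := fun w => green ρ β (shiftedSource f ρ β w)
  have hTmono : MonotoneOn T {w | Measurable w ∧ w ∈ Icc v V} := fun w hw u hu hwu =>
    (hdom w hw.1 hw.2).green_mono (hdom u hu.1 hu.2) hρ hβ fun s =>
      shiftedSource_le_shiftedSource (hmono s) (hK s) ⟨hw.2.1 s, hw.2.2 s⟩
        ⟨hu.2.1 s, hu.2.2 s⟩ (hwu s)
  have hvT : v ≤ T v := by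
    obtain ⟨u₁, hu⟩ := hC2 v hv.continuous ⟨le_rfl, hvV⟩
    refine hv.le_of_operator_le hu hρ hβ fun s => ?_
    simp only [shiftedSource, hρa]
    linarith [hsub s]
  have hTV : T V ≤ V := by
    obtain ⟨u₁, hu⟩ := hC2 V hV.continuous ⟨hvV, le_rfl⟩
    refine hu.le_of_operator_le hV hρ hβ fun s => ?_
    simp only [shiftedSource, hρa]
    linarith [hsuper s]
  obtain ⟨w, hwm, hw, hfix⟩ := exists_fixedPoint_mem_Icc hv.continuous hV.continuous hvV
    (fun w hw hwm => (hdom w hw hwm).continuous_green hρ hβ) hTmono hvT hTV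
  obtain ⟨w₁, hw₁⟩ := hC2 w hw hwm
  rw [hfix] at hw₁
  refine ⟨w, hwm, w₁, hw₁.hasDerivAt, fun s => (hw₁.hasDerivAt_deriv s).congr_deriv ?_⟩
  simp only [shiftedSource, hρa]
  ring

end SubSuperSolution

section Profile

variable {p k m : ℝ}

lemma isBoundedC2_mul_exp_neg {g g₁ g₂ : ℝ → ℝ} {A L : ℝ} (hg : ∀ s, HasDerivAt g (g₁ s) s)
    (hg₁ : ∀ s, HasDerivAt g₁ (g₂ s) s) (h0 : ∀ s, 0 ≤ g s) (hL : ∀ s, |g₁ s| ≤ L * g s) :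
    IsBoundedC2 (fun s => A * exp (-g s)) (fun s => -g₁ s * (A * exp (-g s)))
      fun s => (g₁ s ^ 2 - g₂ s) * (A * exp (-g s)) where
  hasDerivAt s := ((hg s).neg.exp.const_mul A).congr_deriv (by simp only [Pi.neg_apply]; ring)
  hasDerivAt_deriv s := ((hg₁ s).neg.mul ((hg s).neg.exp.const_mul A)).congr_deriv
    (by simp only [Pi.neg_apply]; ring)
  exists_abs_le := ⟨|A|, fun s => by
    rw [abs_mul, abs_exp]
    exact mul_le_of_le_one_right (abs_nonneg A) (exp_le_one_iff.2 (neg_nonpos.2 (h0 s)))⟩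
  exists_abs_deriv_le := by
    refine ⟨|A| * (|L| * exp (-1)), fun s => ?_⟩
    calc |-g₁ s * (A * exp (-g s))| = |A| * (|g₁ s| * exp (-g s)) := by
          rw [abs_mul, abs_neg, abs_mul, abs_exp]; ring
      _ ≤ |A| * (|L| * (g s * exp (-g s))) := by
          rw [← mul_assoc |L|]
          gcongr
          exact (hL s).trans (mul_le_mul_of_nonneg_right (le_abs_self L) (h0 s))
      _ ≤ |A| * (|L| * exp (-1)) := by
          gcongr
          exact mul_exp_neg_le_exp_neg_one (g s)

lemma hasDerivAt_mul_exp_mul (A l s : ℝ) :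
    HasDerivAt (fun s => A * exp (l * s)) (A * l * exp (l * s)) s :=
  (((hasDerivAt_id s).const_mul l).exp.const_mul A).congr_deriv (by simp only [id]; ring)

lemma rpow_eq_rpow_sub_one_mul {x : ℝ} (hx : 0 < x) (p : ℝ) : x ^ p = x ^ (p - 1) * x := by
  rw [← rpow_add_one hx.ne', sub_add_cancel]

/-- The rate `1 / 8` is half the Gaussian rate `1 / 4` of the linear problem, so that the residual,
divided by `V`, contains `-e^(4s) / 16`. This term wins for large `s`; elsewhere the absorption
`V ^ (p - 1)` wins because `C` is large. -/
theorem exists_supersolution (hp : 1 < p) (hk : 0 < k) (m : ℝ) :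
    ∃ C > 0, ∃ V₁ V₂ : ℝ → ℝ, IsBoundedC2 (fun s => C * exp (-(1 / 8 * exp (2 * s)))) V₁ V₂ ∧
      ∀ s, V₂ s + (exp (2 * s) / 2 - m) * V₁ s + (k * (C * exp (-(1 / 8 * exp (2 * s))))
        - (C * exp (-(1 / 8 * exp (2 * s)))) ^ p) ≤ 0 := by
  set c := (k + m ^ 2 / 4) ^ (p - 1)⁻¹
  set y₀ := 4 * (|m| + k + 1)
  have hc : 0 < c := rpow_pos_of_pos (by positivity) _
  refine ⟨c * exp (y₀ / 8), by positivity, _, _, isBoundedC2_mul_exp_neg (L := 2)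
    (fun s => hasDerivAt_mul_exp_mul (1 / 8) 2 s) (fun s => hasDerivAt_mul_exp_mul _ 2 s)
    (fun s => by positivity) (fun s => by rw [abs_of_pos (by positivity)]; linarith), fun s => ?_⟩
  set y := exp (2 * s)
  set V := c * exp (y₀ / 8) * exp (-(1 / 8 * y)) with hVdef
  have hy : 0 < y := exp_pos _
  have hV : 0 < V := by positivity
  have hpow : -y ^ 2 / 16 + (m - 2) * y / 4 + k ≤ V ^ (p - 1) := by
    rcases le_total y y₀ with hle | hle
    · have hcV : c ≤ V := by
        rw [hVdef, mul_assoc, ← exp_add]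
        exact le_mul_of_one_le_right hc.le (one_le_exp (by linarith))
      calc -y ^ 2 / 16 + (m - 2) * y / 4 + k
        _ ≤ k + m ^ 2 / 4 := by nlinarith [sq_nonneg (y / 4 - m / 2)]
        _ = c ^ (p - 1) := (rpow_inv_rpow (by positivity) (sub_pos.2 hp).ne').symm
        _ ≤ V ^ (p - 1) := rpow_le_rpow hc.le hcV (sub_pos.2 hp).le
    · refine le_trans ?_ (rpow_nonneg hV.le _)
      have hlarge : 4 * (m + k + 1) ≤ y := by linarith [le_abs_self m]
      have hfour : 4 ≤ y := by linarith [abs_nonneg m]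
      nlinarith
  rw [rpow_eq_rpow_sub_one_mul hV]
  linear_combination mul_le_mul_of_nonneg_right hpow hV.le

/-- The quadratic expression is the residual of `v = exp (-(a e^(ms) + e^(2s) / 4))` in the linear
equation `w'' + (e^(2s) / 2 - m) w' + k w = 0`, divided by `v`. -/
lemma exists_subsolution_coeff (hk : 0 < k) (hm : 0 < m) :
    ∃ a > 0, ∀ s, 0 ≤ (a * m * exp (m * s) + exp (2 * s) / 2) * (a * m * exp (m * s))
      + (m - 2) * exp (2 * s) / 2 + k := by
  set s₀ := log k / 2 with hs₀
  refine ⟨2 / (m * exp (m * s₀)), by positivity, fun s => ?_⟩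
  set X := 2 / (m * exp (m * s₀)) * m * exp (m * s) with hX
  have hXpos : 0 < X := by positivity
  have hy : 0 < exp (2 * s) := exp_pos _
  have hmy : 0 < m * exp (2 * s) := mul_pos hm hy
  rcases le_total s s₀ with hs | hs
  · have hyk : exp (2 * s) ≤ k := by
      rw [← le_log_iff_exp_le hk]
      linarith
    have hquad : 0 ≤ (X + exp (2 * s) / 2) * X :=
      mul_nonneg (add_nonneg hXpos.le (half_pos hy).le) hXpos.le
    linarith
  · have hX2 : 2 ≤ X := by
      have hexp : exp (m * s₀) ≤ exp (m * s) := exp_le_exp.2 (mul_le_mul_of_nonneg_left hs hm.le)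
      rw [hX, div_mul_eq_mul_div, div_mul_eq_mul_div, le_div_iff₀ (by positivity), mul_assoc]
      gcongr
    linarith [mul_le_mul_of_nonneg_right hX2 hy.le, sq_nonneg X]

/-- In the exponent, `e^(2s) / 4` is the Gaussian decay of the linear problem, whose residual
contains `(m - 2) e^(2s) / 2`; this is negative for `m < 2` and is absorbed by the additional term
`a e^(ms)`. -/
theorem exists_subsolution (hp : 1 < p) (hk : 0 < k) (hm : 0 < m) {A : ℝ} (hA : 0 < A) :
    ∃ v v₁ v₂ : ℝ → ℝ, IsBoundedC2 v v₁ v₂ ∧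
      (∀ s, 0 < v s ∧ v s ≤ A * exp (-(1 / 8 * exp (2 * s)))) ∧
      ∀ s, 0 ≤ v₂ s + (exp (2 * s) / 2 - m) * v₁ s + (k * v s - v s ^ p) := by
  obtain ⟨a, ha, hres⟩ := exists_subsolution_coeff (half_pos hk) hm
  set δ := min A ((k / 2) ^ (p - 1)⁻¹)
  have hδ : 0 < δ := lt_min hA (rpow_pos_of_pos (half_pos hk) _)
  refine ⟨_, _, _, isBoundedC2_mul_exp_neg (A := δ) (L := m + 2)
    (fun s => (hasDerivAt_mul_exp_mul a m s).add (hasDerivAt_mul_exp_mul (1 / 4) 2 s))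
    (fun s => (hasDerivAt_mul_exp_mul _ m s).add (hasDerivAt_mul_exp_mul _ 2 s))
    (fun s => by simp only [Pi.add_apply]; positivity) (fun s => ?_), fun s => ⟨by positivity, ?_⟩,
    fun s => ?_⟩
  all_goals
    simp only [Pi.add_apply]
    have hX : 0 < a * exp (m * s) := by positivity
    have hy : 0 < exp (2 * s) := exp_pos _
  · rw [abs_of_pos (by positivity)]
    linarith [mul_pos hm hy]
  · exact mul_le_mul (min_le_left _ _) (exp_le_exp.2 (by linarith)) (exp_pos _).le hA.le
  · set v := δ * exp (-(a * exp (m * s) + 1 / 4 * exp (2 * s)))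
    have hv : 0 < v := by positivity
    have hvδ : v ≤ δ := mul_le_of_le_one_right hδ.le (exp_le_one_iff.2 (by linarith))
    have hpow : v ^ (p - 1) ≤ k / 2 :=
      calc v ^ (p - 1) ≤ ((k / 2) ^ (p - 1)⁻¹) ^ (p - 1) :=
            rpow_le_rpow hv.le (hvδ.trans (min_le_right _ _)) (sub_pos.2 hp).le
        _ = k / 2 := rpow_inv_rpow (half_pos hk).le (sub_pos.2 hp).ne'
    rw [rpow_eq_rpow_sub_one_mul hv]
    linear_combination mul_nonneg (add_nonneg (hres s) (sub_nonneg.2 hpow)) hv.le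

lemma exists_monotoneOn_sub_rpow (hp : 1 < p) (k C : ℝ) :
    ∃ K, MonotoneOn (fun x => k * x - x ^ p + K * x) (Icc 0 C) := by
  have hderiv (K x : ℝ) : HasDerivAt (fun x => k * x - x ^ p + K * x)
      (k - p * x ^ (p - 1) + K) x :=
    (((hasDerivAt_id x).const_mul k).sub (hasDerivAt_rpow_const (Or.inr hp.le))).add
      ((hasDerivAt_id x).const_mul K) |>.congr_deriv (by ring)
  refine ⟨p * C ^ (p - 1) - k, monotoneOn_of_deriv_nonneg (convex_Icc 0 C)
    (fun x _ => (hderiv _ x).continuousAt.continuousWithinAt)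
    (fun x _ => (hderiv _ x).differentiableAt.differentiableWithinAt) fun x hx => ?_⟩
  obtain ⟨hx0, hxC⟩ := interior_subset hx
  rw [(hderiv _ x).deriv]
  linarith [mul_le_mul_of_nonneg_left (rpow_le_rpow hx0 hxC (sub_pos.2 hp).le)
    (zero_lt_one.trans hp).le]

lemma contDiff_two_of_hasDerivAt {f f₁ f₂ : ℝ → ℝ} (hf : ∀ s, HasDerivAt f (f₁ s) s)
    (hf₁ : ∀ s, HasDerivAt f₁ (f₂ s) s) (hc : Continuous f₂) : ContDiff ℝ 2 f := by
  refine (contDiff_succ_iff_deriv (n := 1)).2 ⟨fun s => (hf s).differentiableAt, by simp, ?_⟩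
  rw [funext fun s => (hf s).deriv, contDiff_one_iff_deriv, funext fun s => (hf₁ s).deriv]
  exact ⟨fun s => (hf₁ s).differentiableAt, hc⟩

theorem exists_profile (hp : 1 < p) (hk : 0 < k) (hm : 0 < m) :
    ∃ w : ℝ → ℝ, ContDiff ℝ 2 w ∧ (∀ s, 0 < w s) ∧ Tendsto w atTop (𝓝 0) ∧
      ∀ s, deriv (deriv w) s + (exp (2 * s) / 2 - m) * deriv w s + k * w s = w s ^ p := by
  obtain ⟨C, hC, V₁, V₂, hV, hsuper⟩ := exists_supersolution hp hk m
  obtain ⟨v, v₁, v₂, hv, hvV, hsub⟩ := exists_subsolution hp hk hm hC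
  obtain ⟨K, hK⟩ := exists_monotoneOn_sub_rpow hp k C
  have hrpow : Continuous fun x : ℝ => x ^ p := continuous_rpow_const (zero_lt_one.trans hp).le
  have hVC (s : ℝ) : C * exp (-(1 / 8 * exp (2 * s))) ≤ C :=
    mul_le_of_le_one_right hC.le (exp_le_one_iff.2 (neg_nonpos.2 (by positivity)))
  obtain ⟨w, ⟨hvw, hwV⟩, w', hw, hw'⟩ := exists_solution_between
    (a := fun s => exp (2 * s) / 2 - m) (f := fun x => k * x - x ^ p) (by fun_prop)
    ⟨-m, by rintro _ ⟨s, rfl⟩; linarith [exp_pos (2 * s)]⟩ (by fun_prop) hv hV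
    (fun s => (hvV s).2) (fun s => hK.mono (Icc_subset_Icc (hvV s).1.le (hVC s))) hsub hsuper
  have hpos (s : ℝ) : 0 < w s := (hvV s).1.trans_le (hvw s)
  have hcont {f f' : ℝ → ℝ} (hf : ∀ s, HasDerivAt f (f' s) s) : Continuous f :=
    continuous_iff_continuousAt.2 fun s => (hf s).continuousAt
  have hw_cont := hcont hw
  have hw'_cont := hcont hw'
  refine ⟨w, contDiff_two_of_hasDerivAt hw hw' (by fun_prop), hpos,
    squeeze_zero (fun s => (hpos s).le) hwV ?_, fun s => ?_⟩
  · have hexp : Tendsto (fun s : ℝ => 1 / 8 * exp (2 * s)) atTop atTop :=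
      (tendsto_exp_atTop.comp (tendsto_id.const_mul_atTop two_pos)).const_mul_atTop (by norm_num)
    simpa using (tendsto_exp_neg_atTop_nhds_zero.comp hexp).const_mul C
  · rw [funext fun s => (hw s).deriv, (hw' s).deriv]
    ring

end Profile

section SelfSimilar

variable {α p d r t : ℝ} {w : ℝ → ℝ}

/-- The self-similar function `r ^ (-α) * w (log (r / √t))`, extended by zero to `t ≤ 0`. -/
noncomputable def selfSimilar (α : ℝ) (w : ℝ → ℝ) (r t : ℝ) : ℝ :=
  if 0 < t then r ^ (-α) * w (log r - log t / 2) else 0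

lemma selfSimilar_of_pos (ht : 0 < t) (r : ℝ) :
    selfSimilar α w r t = r ^ (-α) * w (log r - log t / 2) := if_pos ht

lemma selfSimilar_zero (α : ℝ) (w : ℝ → ℝ) (r : ℝ) : selfSimilar α w r 0 = 0 :=
  if_neg (lt_irrefl 0)

lemma selfSimilar_pos (hw : ∀ s, 0 < w s) (hr : 0 < r) (ht : 0 < t) :
    0 < selfSimilar α w r t := by
  rw [selfSimilar_of_pos ht]
  exact mul_pos (rpow_pos_of_pos hr _) (hw _)

lemma selfSimilar_eventuallyEq (ht : 0 < t) (r : ℝ) :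
    selfSimilar α w r =ᶠ[𝓝 t] fun t => r ^ (-α) * w (log r - log t / 2) := by
  filter_upwards [lt_mem_nhds ht] with x hx using selfSimilar_of_pos hx r

lemma tendsto_log_sub_log_div_two (hr : 0 < r) :
    Tendsto (fun q : ℝ × ℝ => log q.1 - log q.2 / 2) (𝓝 (r, 0) ⊓ 𝓟 {q | 0 < q.2}) atTop := by
  have hsnd : Tendsto Prod.snd (𝓝 (r, (0 : ℝ)) ⊓ 𝓟 {q | 0 < q.2}) (𝓝[>] 0) :=
    tendsto_inf.2 ⟨continuousAt_snd.mono_left inf_le_left,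
      tendsto_inf_right (tendsto_principal_principal.2 fun _ hq => hq)⟩
  have hlog : Tendsto (fun q : ℝ × ℝ => -(log q.2 / 2)) (𝓝 (r, 0) ⊓ 𝓟 {q | 0 < q.2}) atTop :=
    tendsto_neg_atBot_atTop.comp ((tendsto_log_nhdsGT_zero.comp hsnd).atBot_div_const two_pos)
  simpa only [sub_eq_add_neg] using
    ((continuousAt_fst.log hr.ne').mono_left inf_le_left).add_atTop hlog

lemma continuousAt_selfSimilar (hw : Continuous w) (hlim : Tendsto w atTop (𝓝 0)) (hr : 0 < r)
    (ht : 0 ≤ t) : ContinuousAt (fun q : ℝ × ℝ => selfSimilar α w q.1 q.2) (r, t) := by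
  have hpow : ContinuousAt (fun q : ℝ × ℝ => q.1 ^ (-α)) (r, t) :=
    continuousAt_fst.rpow_const (Or.inl hr.ne')
  rcases ht.eq_or_lt with rfl | ht
  · rw [ContinuousAt, selfSimilar_zero]
    refine Tendsto.if ?_ tendsto_const_nhds
    simpa using (hpow.mono_left inf_le_left).mul (hlim.comp (tendsto_log_sub_log_div_two hr))
  · refine (hpow.mul (hw.continuousAt.comp ((continuousAt_fst.log hr.ne').sub
      ((continuousAt_snd.log ht.ne').div_const 2)))).congr ?_
    filter_upwards [continuousAt_snd.eventually (lt_mem_nhds ht)] with q hq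
    exact (selfSimilar_of_pos hq q.1).symm

lemma contDiffAt_selfSimilar_left {N : WithTop ℕ∞} (hw : ContDiff ℝ N w) (hr : 0 < r)
    (ht : 0 < t) : ContDiffAt ℝ N (fun s => selfSimilar α w s t) r := by
  simp only [selfSimilar_of_pos ht]
  exact (contDiffAt_id.rpow_const_of_ne hr.ne').mul
    (hw.contDiffAt.comp r ((contDiffAt_log.2 hr.ne').sub contDiffAt_const))

lemma contDiffAt_selfSimilar_right {N : WithTop ℕ∞} (hw : ContDiff ℝ N w) (ht : 0 < t) :
    ContDiffAt ℝ N (selfSimilar α w r) t := by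
  refine ContDiffAt.congr_of_eventuallyEq ?_ (selfSimilar_eventuallyEq ht r)
  exact contDiffAt_const.mul
    (hw.contDiffAt.comp t (contDiffAt_const.sub ((contDiffAt_log.2 ht.ne').div_const 2)))

lemma rpow_neg_eq_mul (hr : 0 < r) (a : ℝ) : r ^ (-a) = r ^ (-(a + 1)) * r := by
  rw [← rpow_add_one hr.ne', neg_add, neg_add_cancel_right]

lemma hasDerivAt_rpow_neg_mul_comp_log {f : ℝ → ℝ} {f' a b : ℝ} (hr : 0 < r)
    (hf : HasDerivAt f f' (log r - b)) :
    HasDerivAt (fun s => s ^ (-a) * f (log s - b))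
      (r ^ (-(a + 1)) * (f' - a * f (log r - b))) r := by
  have hlog : HasDerivAt (fun s => log s - b) r⁻¹ r := (hasDerivAt_log hr.ne').sub_const b
  refine ((hasDerivAt_rpow_const (p := -a) (Or.inl hr.ne')).mul (hf.comp r hlog)).congr_deriv ?_
  rw [rpow_neg_eq_mul hr a, neg_add']
  simp only [Function.comp_apply]
  field_simp
  ring

lemma deriv_selfSimilar_right (hw : Differentiable ℝ w) (ht : 0 < t) (r : ℝ) :
    deriv (selfSimilar α w r) t = -(r ^ (-α) * deriv w (log r - log t / 2) / (2 * t)) := by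
  rw [(selfSimilar_eventuallyEq ht r).deriv_eq]
  refine (((hw _).hasDerivAt.comp t (((hasDerivAt_log ht.ne').div_const 2).const_sub
    (log r))).const_mul _).deriv.trans ?_
  field_simp

lemma deriv_selfSimilar_left (hw : Differentiable ℝ w) (hr : 0 < r) (ht : 0 < t) :
    deriv (fun s => selfSimilar α w s t) r = r ^ (-(α + 1)) *
      (deriv w (log r - log t / 2) - α * w (log r - log t / 2)) := by
  simp only [selfSimilar_of_pos ht]
  exact (hasDerivAt_rpow_neg_mul_comp_log hr (hw _).hasDerivAt).deriv

lemma deriv_deriv_selfSimilar_left (hw : Differentiable ℝ w) (hw' : Differentiable ℝ (deriv w))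
    (hr : 0 < r) (ht : 0 < t) :
    deriv (deriv fun s => selfSimilar α w s t) r = r ^ (-(α + 2)) *
      (deriv (deriv w) (log r - log t / 2) - (2 * α + 1) * deriv w (log r - log t / 2)
        + α * (α + 1) * w (log r - log t / 2)) := by
  have hfirst : (deriv fun s => selfSimilar α w s t) =ᶠ[𝓝 r] fun s =>
      s ^ (-(α + 1)) * (deriv w (log s - log t / 2) - α * w (log s - log t / 2)) := by
    filter_upwards [lt_mem_nhds hr] with s hs using deriv_selfSimilar_left hw hs ht
  have hsecond := hasDerivAt_rpow_neg_mul_comp_log (a := α + 1) hr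
    ((hw' (log r - log t / 2)).hasDerivAt.sub ((hw (log r - log t / 2)).hasDerivAt.const_mul α))
  rw [hfirst.deriv_eq]
  refine hsecond.deriv.trans ?_
  simp only [Pi.sub_apply]
  ring_nf

theorem selfSimilar_equation (hα : α * p = α + 2) (hw : ContDiff ℝ 2 w) (hw0 : ∀ s, 0 ≤ w s)
    (hode : ∀ s, deriv (deriv w) s + (exp (2 * s) / 2 - (2 * α + 2 - d)) * deriv w s
      + α * (α + 2 - d) * w s = w s ^ p) (hr : 0 < r) (ht : 0 < t) :
    deriv (selfSimilar α w r) t = deriv (deriv fun s => selfSimilar α w s t) r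
      + ((d - 1) / r) * deriv (fun s => selfSimilar α w s t) r - selfSimilar α w r t ^ p := by
  have hdiff : Differentiable ℝ w := hw.differentiable two_ne_zero
  have hdiff' : Differentiable ℝ (deriv w) := hw.differentiable_deriv_two
  rw [deriv_selfSimilar_right hdiff ht, deriv_deriv_selfSimilar_left hdiff hdiff' hr ht,
    deriv_selfSimilar_left hdiff hr ht, selfSimilar_of_pos ht]
  have hexp : exp (2 * (log r - log t / 2)) = r ^ 2 / t := by
    rw [mul_sub, mul_div_cancel₀ _ two_ne_zero, exp_sub, exp_log ht, two_mul, exp_add,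
      exp_log hr, sq]
  rw [mul_rpow (rpow_nonneg hr.le _) (hw0 _), ← rpow_mul hr.le, neg_mul α p, hα,
    ← hode, hexp, rpow_neg_eq_mul hr α, rpow_neg_eq_mul hr (α + 1), add_assoc α 1 1,
    one_add_one_eq_two]
  field_simp
  ring

end SelfSimilar

end RadialHeat

open RadialHeat

theorem nontrivial_radial_solution_with_zero_data_general
    (d p : ℝ) (hp : 1 < p) (hdp : d < 2 * p / (p - 1)) :
    ∃ u : ℝ → ℝ → ℝ,
      ContinuousOn (fun q : ℝ × ℝ => u q.1 q.2) {q : ℝ × ℝ | 0 < q.1 ∧ 0 ≤ q.2} ∧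
      (∀ r : ℝ, 0 < r → ∀ t : ℝ, 0 < t → ContDiffAt ℝ 2 (fun s => u s t) r) ∧
      (∀ r : ℝ, 0 < r → ∀ t : ℝ, 0 < t → ContDiffAt ℝ 1 (u r) t) ∧
      (∀ r : ℝ, 0 < r → ∀ t : ℝ, 0 < t →
        deriv (u r) t
          = deriv (deriv fun s => u s t) r + ((d - 1) / r) * deriv (fun s => u s t) r
            - u r t ^ p) ∧
      (∀ r : ℝ, 0 < r → ∀ t : ℝ, 0 < t → 0 < u r t) ∧
      ∀ r : ℝ, 0 < r → u r 0 = 0 := by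
  have hp0 : 0 < p - 1 := sub_pos.2 hp
  set α := 2 / (p - 1) with hαdef
  have hα : 0 < α := div_pos two_pos hp0
  have hαp : α * p = α + 2 := by rw [hαdef]; field_simp; ring
  have hd : 0 < α + 2 - d := by rwa [← hαp, sub_pos, hαdef, div_mul_eq_mul_div]
  obtain ⟨w, hw, hpos, hlim, hode⟩ := exists_profile (m := 2 * α + 2 - d)
    (k := α * (α + 2 - d)) hp (mul_pos hα hd) (by linarith)
  exact ⟨selfSimilar α w,
    fun q hq => (continuousAt_selfSimilar hw.continuous hlim hq.1 hq.2).continuousWithinAt,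
    fun r hr t ht => contDiffAt_selfSimilar_left hw hr ht,
    fun r _ t ht => contDiffAt_selfSimilar_right (hw.of_le one_le_two) ht,
    fun r hr t ht => selfSimilar_equation hαp hw (fun s => (hpos s).le) hode hr ht,
    fun r hr t ht => selfSimilar_pos hpos hr ht, fun r _ => selfSimilar_zero α w r⟩

/-- for an integer `n ≥ 2` and `p > 1` with `n < 2p/(p-1)`, there is a
nontrivial classical solution of the radial equation
`u_t = u_rr + ((n-1)/r) u_r − u^p` on `(0,∞)` with vanishing initial data. -/
theorem nontrivial_radial_solution_with_zero_data
    (n : ℕ) (hn : 2 ≤ n) (p : ℝ) (hp : 1 < p) (hnp : (n : ℝ) < 2 * p / (p - 1)) :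
    ∃ u : ℝ → ℝ → ℝ,
      ContinuousOn (fun q : ℝ × ℝ => u q.1 q.2) {q : ℝ × ℝ | 0 < q.1 ∧ 0 ≤ q.2} ∧
      (∀ r : ℝ, 0 < r → ∀ t : ℝ, 0 < t → ContDiffAt ℝ 2 (fun s => u s t) r) ∧
      (∀ r : ℝ, 0 < r → ∀ t : ℝ, 0 < t → ContDiffAt ℝ 1 (u r) t) ∧
      (∀ r : ℝ, 0 < r → ∀ t : ℝ, 0 < t →
        deriv (u r) t
          = deriv (deriv fun s => u s t) r + (((n : ℝ) - 1) / r) * deriv (fun s => u s t) r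
            - u r t ^ p) ∧
      (∀ r : ℝ, 0 < r → ∀ t : ℝ, 0 < t → 0 ≤ u r t) ∧
      (∀ r : ℝ, 0 < r → u r 0 = 0) ∧
      ∃ r : ℝ, 0 < r ∧ ∃ t : ℝ, 0 ≤ t ∧ u r t ≠ 0 := by
  obtain ⟨u, hcont, hC2, hC1, heq, hpos, h0⟩ :=
    nontrivial_radial_solution_with_zero_data_general n p hp hnp
  exact ⟨u, hcont, hC2, hC1, heq, fun r hr t ht => (hpos r hr t ht).le, h0,
    1, one_pos, 1, zero_le_one, (hpos 1 one_pos 1 one_pos).ne'⟩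
end
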